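/- Let R be a Noetherian local ring of Krull dimension d containing a field, and let x_1,…,x_d be a system of parameters of R. Then 𝔥^d_x(R^n) = n for every integer n ≥ 1. -/

import Mathlib

open scoped BigOperators ENNReal

universe u v

/-- A filtration of `M` of length `h` whose factors are cyclic modules killed by `J`. -/
def HasQLFiltration (S : Type u) [CommRing S] (J : Ideal S)
    (M : Type v) [AddCommGroup M] [Module S M] (h : ℕ) : Prop :=
  ∃ c : Fin (h + 1) → Submodule S M,
    Monotone c ∧ c 0 = ⊥ ∧ c (Fin.last h) = ⊤ ∧
    ∀ i : Fin h,
      (∃ m : M, c i.succ = c i.castSucc ⊔ Submodule.span S {m}) ∧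
      ∀ a ∈ J, ∀ x ∈ c i.succ, a • x ∈ c i.castSucc

/-- The `J`-quasilength of `M`. -/
noncomputable def quasilength (S : Type u) [CommRing S] (J : Ideal S)
    (M : Type v) [AddCommGroup M] [Module S M] : ℕ∞ :=
  sInf {n : ℕ∞ | ∃ h : ℕ, n = (h : ℕ∞) ∧ HasQLFiltration S J M h}

/-- The ideal `(x₁^{t₁}, …, x_d^{t_d})`. -/
def powerIdeal {R : Type u} [CommRing R] {d : ℕ} (x : Fin d → R) (t : Fin d → ℕ) : Ideal R :=
  Ideal.span (Set.range fun i => x i ^ t i)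

/-- The content `𝔥^d_x(M)` of `M` with respect to `x₁, …, x_d`. -/
noncomputable def content {R : Type u} [CommRing R] {d : ℕ} (x : Fin d → R)
    (M : Type v) [AddCommGroup M] [Module R M] : ℝ≥0∞ :=
  ⨆ s : ℕ, ⨅ t : {t : Fin d → ℕ // ∀ i, s ≤ t i ∧ 0 < t i},
    (quasilength R (Ideal.span (Set.range x))
        (M ⧸ (powerIdeal x (t : Fin d → ℕ) • (⊤ : Submodule R M))) : ℝ≥0∞) /
      ∏ i, ((t : Fin d → ℕ) i : ℝ≥0∞)



/-- Equational form of a quasilength filtration of `R^n / I_t R^n` of length `h`. -/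
def HasChain (R : Type*) [CommRing R] {d : ℕ} (x : Fin d → R) (t : Fin d → ℕ) (n h : ℕ) : Prop :=
  ∃ (u : Fin h → Fin n → R) (a : Fin h → Fin d → Fin h → R)
    (c : Fin h → Fin d → Fin n → Fin d → R) (b : Fin n → Fin h → R)
    (v : Fin n → Fin n → Fin d → R),
    (∀ i j k, i ≤ k → a i j k = 0) ∧
    (∀ i j r, x j * u i r = ∑ k, a i j k * u k r + ∑ l, c i j r l * x l ^ t l) ∧
    (∀ r r', (if r = r' then 1 else 0) = ∑ k, b r k * u k r' + ∑ l, v r r' l * x l ^ t l)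

theorem HasChain.map {R R' : Type*} [CommRing R] [CommRing R'] (φ : R →+* R') {d : ℕ}
    {x : Fin d → R} {t : Fin d → ℕ} {n h : ℕ} (H : HasChain R x t n h) :
    HasChain R' (fun i => φ (x i)) t n h := by
  obtain ⟨u, a, c, b, v, h1, h2, h3⟩ := H
  refine ⟨fun i r => φ (u i r), fun i j k => φ (a i j k), fun i j r l => φ (c i j r l),
    fun r k => φ (b r k), fun r r' l => φ (v r r' l), ?_, ?_, ?_⟩
  · intro i j k hk
    simp [h1 i j k hk]
  · intro i j r
    simpa using congrArg φ (h2 i j r)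
  · intro r r'
    have := congrArg φ (h3 r r')
    rw [apply_ite φ] at this
    simpa using this

theorem mem_smul_top_pi {R : Type*} [CommRing R] {n : ℕ} (I : Ideal R) (w : Fin n → R) :
    w ∈ I • (⊤ : Submodule R (Fin n → R)) ↔ ∀ r, w r ∈ I := by
  constructor
  · intro hw r
    induction hw using Submodule.smul_induction_on' with
    | smul a ha m hm => exact I.mul_mem_right _ ha
    | add y hy z hz h1 h2 => exact I.add_mem h1 h2
  · intro hw
    have : w = ∑ r, w r • (Pi.single r (1 : R) : Fin n → R) := by
      ext r'
      simp [Finset.sum_apply, Pi.single_apply]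
    rw [this]
    exact Submodule.sum_mem _ fun r _ => Submodule.smul_mem_smul (hw r) trivial

theorem exists_coeff_of_mem_span {R M : Type*} [CommRing R] [AddCommGroup M] [Module R M]
    {h : ℕ} (m : Fin h → M) (s : Set (Fin h)) (y : M) (hy : y ∈ Submodule.span R (m '' s)) :
    ∃ a : Fin h → R, (∀ k, k ∉ s → a k = 0) ∧ y = ∑ k, a k • m k := by
  classical
  induction hy using Submodule.span_induction with
  | mem z hz =>
    obtain ⟨k, hk, rfl⟩ := hz
    refine ⟨Pi.single k 1, ?_, ?_⟩
    · intro k' hk'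
      have : k' ≠ k := by rintro rfl; exact hk' hk
      simp [Pi.single_apply, this]
    · simp [Pi.single_apply, ite_smul]
  | zero => exact ⟨0, by simp, by simp⟩
  | add y z _ _ h1 h2 =>
    obtain ⟨a, ha, rfl⟩ := h1
    obtain ⟨b, hb, rfl⟩ := h2
    refine ⟨a + b, ?_, ?_⟩
    · intro k hk
      simp [ha k hk, hb k hk]
    · simp [add_smul, Finset.sum_add_distrib]
  | smul r y _ h1 =>
    obtain ⟨a, ha, rfl⟩ := h1
    refine ⟨r • a, ?_, ?_⟩
    · intro k hk
      simp [ha k hk]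
    · simp [Finset.smul_sum, mul_smul]

theorem HasQLFiltration.hasChain {R : Type u} [CommRing R] {d : ℕ} (x : Fin d → R)
    (t : Fin d → ℕ) (n h : ℕ)
    (H : HasQLFiltration R (Ideal.span (Set.range x))
      ((Fin n → R) ⧸ (powerIdeal x t • (⊤ : Submodule R (Fin n → R)))) h) :
    HasChain R x t n h := by
  classical
  obtain ⟨c, hmono, h0, hl, hstep⟩ := H
  choose m hm using fun i => (hstep i).1
  have hI : ∀ (i : Fin (h + 1)), c i = Submodule.span R (m '' {k | k.val < i.val}) := by
    intro i
    induction i using Fin.induction with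
    | zero => simp [h0]
    | succ i ih =>
      rw [hm, ih, ← Submodule.span_union]
      congr 1
      ext y
      simp only [Fin.val_castSucc, Set.mem_union, Set.mem_image, Set.mem_ofPred_eq,
        Set.mem_singleton_iff, Fin.val_succ]
      constructor
      · rintro (⟨k, hk, rfl⟩ | rfl)
        · exact ⟨k, by omega, rfl⟩
        · exact ⟨i, by omega, rfl⟩
      · rintro ⟨k, hk, rfl⟩
        rcases Nat.lt_succ_iff_lt_or_eq.1 hk with h1 | h1
        · exact Or.inl ⟨k, h1, rfl⟩
        · exact Or.inr (by rw [Fin.ext h1])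
  choose u hu using fun i => Submodule.Quotient.mk_surjective _ (m i)
  have hx : ∀ i j, x j • m i ∈ Submodule.span R (m '' {k | k.val < i.val}) := by
    intro i j
    have := (hstep i).2 (x j) (Ideal.subset_span ⟨j, rfl⟩) (m i)
      (by rw [hm]; exact Submodule.mem_sup_right (Submodule.mem_span_singleton_self _))
    rw [hI] at this
    simpa using this
  choose a ha ha' using fun i j => exists_coeff_of_mem_span m _ _ (hx i j)
  have hb0 : ∀ r : Fin n, (Submodule.Quotient.mk (Pi.single r (1 : R)) :
      (Fin n → R) ⧸ (powerIdeal x t • (⊤ : Submodule R (Fin n → R)))) ∈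
      Submodule.span R (m '' {k | k.val < (Fin.last h).val}) := by
    intro r
    rw [← hI, hl]
    trivial
  choose b hb hb' using fun r => exists_coeff_of_mem_span m _ _ (hb0 r)
  have key : ∀ (z : Fin n → R) (e : Fin h → R),
      (Submodule.Quotient.mk z :
        (Fin n → R) ⧸ (powerIdeal x t • (⊤ : Submodule R (Fin n → R)))) = ∑ k, e k • m k →
      ∀ r, ∃ c : Fin d → R, z r = ∑ k, e k * u k r + ∑ l, c l * x l ^ t l := by
    intro z e hz r
    have h1 : (Submodule.Quotient.mk z :
        (Fin n → R) ⧸ (powerIdeal x t • (⊤ : Submodule R (Fin n → R)))) =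
        Submodule.Quotient.mk (∑ k, e k • u k) := by
      rw [hz, ← Submodule.mkQ_apply, map_sum]
      simp [hu]
    rw [Submodule.Quotient.eq, mem_smul_top_pi] at h1
    have h2 := h1 r
    obtain ⟨c, hc⟩ := Ideal.mem_span_range_iff_exists_fun.1 h2
    refine ⟨c, ?_⟩
    rw [hc]
    simp
  choose cc hcc using fun i j => key (x j • u i) (a i j) (by
    rw [← ha' i j, ← hu]; rfl)
  choose vv hvv using fun r => key (Pi.single r 1) (b r) (hb' r)
  refine ⟨u, a, cc, b, vv, ?_, ?_, ?_⟩
  · intro i j k hk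
    apply ha
    simpa using hk
  · intro i j r
    exact hcc i j r
  · intro r r'
    rw [← hvv r r']
    simp [Pi.single_apply, eq_comm]

theorem hasQLFiltration_of_rank {R : Type u} [CommRing R] {d : ℕ} (x : Fin d → R)
    {M : Type v} [AddCommGroup M] [Module R M] {ι : Type*} [Fintype ι] (w : ι → M) (ρ : ι → ℕ)
    (h1 : ∀ i j, x j • w i ∈ Submodule.span R (w '' {k | ρ k < ρ i}))
    (h2 : Submodule.span R (Set.range w) = ⊤) :
    HasQLFiltration R (Ideal.span (Set.range x)) M (Fintype.card ι) := by
  classical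
  let e0 : Fin (Fintype.card ι) ≃ ι := (Fintype.equivFin ι).symm
  let e : Fin (Fintype.card ι) ≃ ι := (Tuple.sort (ρ ∘ e0)).trans e0
  have he : Monotone (ρ ∘ e) := Tuple.monotone_sort (ρ ∘ e0)
  refine ⟨fun i => Submodule.span R ((w ∘ e) '' {k | k.val < i.val}), ?_, ?_, ?_, ?_⟩
  · intro i j hij
    apply Submodule.span_mono
    apply Set.image_mono
    intro k hk
    have h1 : k.val < i.val := hk
    have h2 : i.val ≤ j.val := hij
    exact lt_of_lt_of_le h1 h2
  · simp
  · have : {k : Fin (Fintype.card ι) | k.val < (Fin.last (Fintype.card ι)).val} = Set.univ := by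
      ext k; simp
    simp only [this, Set.image_univ]
    rw [EquivLike.range_comp, h2]
  · intro i
    have hs : Submodule.span R ((w ∘ e) '' {k | k.val < i.succ.val}) =
        Submodule.span R ((w ∘ e) '' {k | k.val < i.castSucc.val}) ⊔
          Submodule.span R {w (e i)} := by
      rw [← Submodule.span_union]
      congr 1
      ext y
      simp only [Fin.val_castSucc, Set.mem_union, Set.mem_image, Set.mem_ofPred_eq,
        Set.mem_singleton_iff, Fin.val_succ]
      constructor
      · rintro ⟨k, hk, rfl⟩
        rcases Nat.lt_succ_iff_lt_or_eq.1 hk with h1 | h1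
        · exact Or.inl ⟨k, h1, rfl⟩
        · exact Or.inr (by rw [Fin.ext h1]; rfl)
      · rintro (⟨k, hk, rfl⟩ | rfl)
        · exact ⟨k, by omega, rfl⟩
        · exact ⟨i, by omega, rfl⟩
    refine ⟨⟨w (e i), hs⟩, ?_⟩
    have hmem : ∀ k : Fin (Fintype.card ι), k ≤ i → ∀ j, x j • w (e k) ∈
        Submodule.span R ((w ∘ e) '' {k | k.val < i.castSucc.val}) := by
      intro k hk j
      refine Submodule.span_mono ?_ (h1 (e k) j)
      rintro _ ⟨l, hl, rfl⟩
      obtain ⟨l', rfl⟩ := e.surjective l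
      refine ⟨l', ?_, rfl⟩
      by_contra hcon
      have h3 : k ≤ l' := le_trans hk (by simpa using hcon)
      have := he h3
      simp only [Function.comp, Set.mem_ofPred_eq] at this hl
      omega
    intro a ha y hy
    have hle : Submodule.span R ((w ∘ e) '' {k | k.val < i.succ.val}) ≤
        Submodule.span R ((w ∘ e) '' {k | k.val < i.succ.val}) := le_rfl
    refine Submodule.span_induction (p := fun a _ => a • y ∈
        Submodule.span R ((w ∘ e) '' {k | k.val < i.castSucc.val})) ?_ ?_ ?_ ?_ ha
    · rintro _ ⟨j, rfl⟩
      refine Submodule.span_induction (p := fun y _ => x j • y ∈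
        Submodule.span R ((w ∘ e) '' {k | k.val < i.castSucc.val})) ?_ ?_ ?_ ?_ hy
      · rintro _ ⟨k, hk, rfl⟩
        exact hmem k (by
          have : k.val < i.val + 1 := hk
          exact Fin.le_def.2 (by omega)) j
      · simp
      · intro y z _ _ h1 h2
        rw [smul_add]
        exact Submodule.add_mem _ h1 h2
      · intro r y _ h1
        rw [smul_comm]
        exact Submodule.smul_mem _ _ h1
    · simp
    · intro y z _ _ h1 h2
      rw [add_smul]
      exact Submodule.add_mem _ h1 h2
    · intro r y _ h1
      rw [smul_assoc]
      exact Submodule.smul_mem _ _ h1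

/-- The monomial filtration. -/
theorem hasQLFiltration_monomial {R : Type u} [CommRing R] {d : ℕ} (x : Fin d → R)
    (t : Fin d → ℕ) (n : ℕ) :
    HasQLFiltration R (Ideal.span (Set.range x))
      ((Fin n → R) ⧸ (powerIdeal x t • (⊤ : Submodule R (Fin n → R)))) (n * ∏ i, t i) := by
  classical
  let ι := Fin n × (∀ i : Fin d, Fin (t i))
  let W := powerIdeal x t • (⊤ : Submodule R (Fin n → R))
  let mon : (Fin d → ℕ) → R := fun e => ∏ i, x i ^ e i
  let w' : Fin n → (Fin d → ℕ) → (Fin n → R) ⧸ W := fun r e =>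
    W.mkQ (Pi.single r (mon e))
  have hw0 : ∀ r e j, t j ≤ e j → w' r e = 0 := by
    intro r e j hj
    simp only [w', Submodule.mkQ_apply]
    rw [Submodule.Quotient.mk_eq_zero, mem_smul_top_pi]
    intro r'
    rw [Pi.single_apply]
    split_ifs
    · have h1 : x j ^ t j ∈ powerIdeal x t := Ideal.subset_span ⟨j, rfl⟩
      refine Ideal.mem_of_dvd _ ?_ h1
      exact (pow_dvd_pow _ hj).trans (Finset.dvd_prod_of_mem (fun i => x i ^ e i) (Finset.mem_univ j))
    · exact Ideal.zero_mem _
  have hxw : ∀ r e j, x j • w' r e = w' r (Function.update e j (e j + 1)) := by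
    intro r e j
    simp only [w']
    rw [← map_smul, ← Pi.single_smul]
    congr 2
    simp only [mon, smul_eq_mul]
    rw [← Finset.mul_prod_erase _ _ (Finset.mem_univ j),
      ← Finset.mul_prod_erase (a := j) Finset.univ (fun i => x i ^ Function.update e j (e j + 1) i)
        (Finset.mem_univ j)]
    rw [Function.update_self, pow_succ]
    have : ∏ i ∈ Finset.univ.erase j, x i ^ Function.update e j (e j + 1) i =
        ∏ i ∈ Finset.univ.erase j, x i ^ e i := by
      apply Finset.prod_congr rfl
      intro i hi
      rw [Function.update_of_ne (Finset.ne_of_mem_erase hi)]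
    rw [this]
    ring
  let w : ι → (Fin n → R) ⧸ W := fun i => w' i.1 (fun k => (i.2 k).val)
  let ρ : ι → ℕ := fun i => (∑ k, t k) - ∑ k, (i.2 k).val
  have := hasQLFiltration_of_rank x w ρ ?_ ?_
  · simpa [ι, Fintype.card_prod, Fintype.card_pi] using this
  · rintro ⟨r, e⟩ j
    simp only [w]
    rw [hxw]
    by_cases hj : (e j).val + 1 < t j
    · apply Submodule.subset_span
      refine ⟨⟨r, Function.update e j ⟨(e j).val + 1, hj⟩⟩, ?_, ?_⟩
      · simp only [Set.mem_ofPred_eq, ρ]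
        have h1 : ∑ k, ((Function.update e j ⟨(e j).val + 1, hj⟩ : ∀ i, Fin (t i)) k).val =
            ∑ k, (e k).val + 1 := by
          rw [← Finset.add_sum_erase _ _ (Finset.mem_univ j),
            ← Finset.add_sum_erase (a := j) Finset.univ (fun i => (e i).val) (Finset.mem_univ j)]
          rw [Function.update_self]
          have : ∑ i ∈ Finset.univ.erase j,
              ((Function.update e j ⟨(e j).val + 1, hj⟩ : ∀ i, Fin (t i)) i).val =
              ∑ i ∈ Finset.univ.erase j, (e i).val := by
            apply Finset.sum_congr rfl
            intro i hi
            rw [Function.update_of_ne (Finset.ne_of_mem_erase hi)]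
          rw [this]
          simp only
          ring
        have h2 : ∑ k, ((Function.update e j ⟨(e j).val + 1, hj⟩ : ∀ i, Fin (t i)) k).val ≤
            ∑ k, t k := Finset.sum_le_sum fun k _ => (Fin.is_lt _).le
        omega
      · simp only [w]
        congr 1
        ext k
        by_cases hk : k = j
        · subst hk; simp
        · simp [hk]
    · rw [hw0 _ _ j (by rw [Function.update_self]; omega)]
      exact Submodule.zero_mem _
  · rw [eq_top_iff]
    rintro y -
    obtain ⟨y, rfl⟩ := W.mkQ_surjective y
    have hy : y = ∑ r, y r • (Pi.single r (1 : R) : Fin n → R) := by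
      ext r'
      simp [Finset.sum_apply, Pi.single_apply]
    rw [hy, map_sum]
    refine Submodule.sum_mem _ fun r _ => ?_
    rw [map_smul]
    apply Submodule.smul_mem
    have h1 : W.mkQ (Pi.single r (1 : R)) = w' r 0 := by simp [w', mon]
    rw [h1]
    by_cases hz : ∀ j, 0 < t j
    · exact Submodule.subset_span ⟨⟨r, fun j => ⟨0, hz j⟩⟩, rfl⟩
    · push Not at hz
      obtain ⟨j, hj⟩ := hz
      rw [hw0 r 0 j (by simpa using hj)]
      exact Submodule.zero_mem _


theorem length_eq_add_of_exact_tower (B : Type*) {R M N P : Type*} [CommRing B] [CommRing R]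
    [Algebra B R] [AddCommGroup M] [Module R M] [Module B M] [IsScalarTower B R M]
    [AddCommGroup N] [Module R N] [Module B N] [IsScalarTower B R N]
    [AddCommGroup P] [Module R P] [Module B P] [IsScalarTower B R P]
    (f : M →ₗ[R] N) (g : N →ₗ[R] P) (hf : Function.Injective f) (hg : Function.Surjective g)
    (H : Function.Exact f g) :
    Module.length B N = Module.length B M + Module.length B P :=
  Module.length_eq_add_of_exact (f.restrictScalars B) (g.restrictScalars B) hf hg H

theorem length_sup_span_le_aux {B R M : Type*} [CommRing B] [CommRing R] [Algebra B R]
    [AddCommGroup M] [Module R M] [Module B M] [IsScalarTower B R M] (J : Ideal R)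
    (N N' : Submodule R M) (hle : N ≤ N') (m : M) (hm : m ∈ N') (hJ : ∀ a ∈ J, a • m ∈ N)
    (hN' : ∀ y ∈ N', ∃ a ∈ N, ∃ r : R, a + r • m = y) :
    Module.length B N' ≤ Module.length B N + Module.length B (R ⧸ J) := by
  have h1 := length_eq_add_of_exact_tower B (Submodule.inclusion hle)
    ((LinearMap.range (Submodule.inclusion hle)).mkQ)
    (Submodule.inclusion_injective hle) (Submodule.mkQ_surjective _)
    (LinearMap.exact_iff.2 (Submodule.ker_mkQ _))
  have hker : J ≤ LinearMap.ker ((LinearMap.range (Submodule.inclusion hle)).mkQ.comp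
      (LinearMap.toSpanSingleton R N' ⟨m, hm⟩)) := by
    intro a ha
    rw [LinearMap.mem_ker, LinearMap.comp_apply, Submodule.mkQ_apply,
      Submodule.Quotient.mk_eq_zero]
    exact ⟨⟨a • m, hJ a ha⟩, rfl⟩
  have hsurj : Function.Surjective (Submodule.liftQ J _ hker) := by
    intro y
    obtain ⟨⟨y, hy⟩, rfl⟩ := Submodule.mkQ_surjective _ y
    obtain ⟨a, ha, r, hab⟩ := hN' y hy
    refine ⟨Submodule.Quotient.mk r, ?_⟩
    rw [Submodule.liftQ_apply, LinearMap.comp_apply, eq_comm, Submodule.mkQ_apply,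
      Submodule.mkQ_apply, Submodule.Quotient.eq]
    refine ⟨⟨a, ha⟩, Subtype.ext ?_⟩
    change a = y - r • m
    rw [← hab, add_sub_cancel_right]
  have h2 := Module.length_le_of_surjective ((Submodule.liftQ J _ hker).restrictScalars B) hsurj
  rw [h1]
  exact add_le_add le_rfl h2

theorem length_sup_span_le {B R M : Type*} [CommRing B] [CommRing R] [Algebra B R]
    [AddCommGroup M] [Module R M] [Module B M] [IsScalarTower B R M] (J : Ideal R)
    (N : Submodule R M) (m : M) (hJ : ∀ a ∈ J, a • m ∈ N) :
    Module.length B (N ⊔ Submodule.span R {m} : Submodule R M) ≤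
      Module.length B N + Module.length B (R ⧸ J) := by
  refine length_sup_span_le_aux J N _ le_sup_left m
    (Submodule.mem_sup_right (Submodule.mem_span_singleton_self m)) hJ ?_
  intro y hy
  obtain ⟨a, ha, b, hb, hab⟩ := Submodule.mem_sup.1 hy
  obtain ⟨r, rfl⟩ := Submodule.mem_span_singleton.1 hb
  exact ⟨a, ha, r, hab⟩

theorem HasChain.length_le {B R : Type*} [CommRing B] [CommRing R] [Algebra B R] {d : ℕ}
    {x : Fin d → R} {t : Fin d → ℕ} {n h : ℕ} (H : HasChain R x t n h) :
    n * Module.length B (R ⧸ powerIdeal x t) ≤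
      h * Module.length B (R ⧸ Ideal.span (Set.range x)) := by
  classical
  obtain ⟨u, a, c, b, v, h1, h2, h3⟩ := H
  let W : Submodule R (Fin n → R) := powerIdeal x t • (⊤ : Submodule R (Fin n → R))
  let w : Fin h → (Fin n → R) ⧸ W := fun i => W.mkQ (u i)
  have key : ∀ (z : Fin n → R) (e : Fin h → R) (c : Fin n → Fin d → R),
      (∀ r, z r = ∑ k, e k * u k r + ∑ l, c r l * x l ^ t l) →
      W.mkQ z = ∑ k, e k • w k := by
    intro z e c hz
    have : W.mkQ z = W.mkQ (∑ k, e k • u k) := by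
      simp only [Submodule.mkQ_apply]
      rw [Submodule.Quotient.eq, mem_smul_top_pi]
      intro r
      have : (z - ∑ k, e k • u k) r = ∑ l, c r l * x l ^ t l := by
        simp [hz r]
      rw [this]
      exact Ideal.sum_mem _ fun l _ => Ideal.mul_mem_left _ _ (Ideal.subset_span ⟨l, rfl⟩)
    rw [this, map_sum]
    simp [w]
  let N : ℕ → Submodule R ((Fin n → R) ⧸ W) := fun i => Submodule.span R (w '' {k | k.val < i})
  have hN : ∀ i, i ≤ h → Module.length B (N i) ≤
      i * Module.length B (R ⧸ Ideal.span (Set.range x)) := by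
    intro i
    induction i with
    | zero =>
      intro _
      have : N 0 = ⊥ := by simp [N]
      rw [this]
      simp
    | succ i ih =>
      intro hi
      have hs : N (i + 1) = N i ⊔ Submodule.span R {w ⟨i, hi⟩} := by
        simp only [N]
        rw [← Submodule.span_union]
        congr 1
        ext y
        simp only [Set.mem_union, Set.mem_image, Set.mem_ofPred_eq, Set.mem_singleton_iff]
        constructor
        · rintro ⟨k, hk, rfl⟩
          rcases Nat.lt_succ_iff_lt_or_eq.1 hk with h1 | h1
          · exact Or.inl ⟨k, h1, rfl⟩
          · right
            congr 1
            exact Fin.ext h1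
        · rintro (⟨k, hk, rfl⟩ | rfl)
          · exact ⟨k, by omega, rfl⟩
          · exact ⟨⟨i, hi⟩, by simp, rfl⟩
      rw [hs]
      have hxN : ∀ a ∈ Ideal.span (Set.range x), a • w ⟨i, hi⟩ ∈ N i := by
        intro y hy
        refine Submodule.span_induction (p := fun y _ => y • w ⟨i, hi⟩ ∈ N i) ?_ ?_ ?_ ?_ hy
        · rintro _ ⟨j, rfl⟩
          have := key (x j • u ⟨i, hi⟩) (a ⟨i, hi⟩ j) (c ⟨i, hi⟩ j) (fun r => h2 ⟨i, hi⟩ j r)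
          rw [map_smul] at this
          simp only [w] at this ⊢
          rw [this]
          refine Submodule.sum_mem _ fun k _ => ?_
          by_cases hk : k.val < i
          · exact Submodule.smul_mem _ _ (Submodule.subset_span ⟨k, hk, rfl⟩)
          · rw [h1 _ j k (Fin.le_def.2 (by simpa using hk)), zero_smul]
            exact Submodule.zero_mem _
        · simp
        · intro y z _ _ h1 h2
          rw [add_smul]
          exact Submodule.add_mem _ h1 h2
        · intro r y _ h1
          rw [smul_assoc]
          exact Submodule.smul_mem _ _ h1
      refine (length_sup_span_le (B := B) (Ideal.span (Set.range x)) (N i) _ hxN).trans ?_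
      push_cast
      rw [add_mul, one_mul]
      gcongr
      exact ih (by omega)
  have htop : N h = ⊤ := by
    rw [eq_top_iff]
    rintro y -
    obtain ⟨y, rfl⟩ := W.mkQ_surjective y
    have hy : y = ∑ r, y r • (Pi.single r (1 : R) : Fin n → R) := by
      ext r'
      simp [Finset.sum_apply, Pi.single_apply]
    rw [hy, map_sum]
    refine Submodule.sum_mem _ fun r _ => ?_
    rw [map_smul]
    apply Submodule.smul_mem
    rw [key (Pi.single r 1) (b r) (v r) (fun r' => by
      rw [← h3 r r']; simp [Pi.single_apply, eq_comm])]
    exact Submodule.sum_mem _ fun k _ =>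
      Submodule.smul_mem _ _ (Submodule.subset_span ⟨k, k.2, rfl⟩)
  have hlen := hN h le_rfl
  rw [htop] at hlen
  refine le_trans ?_ hlen
  let g0 : (Fin n → R) →ₗ[R] (Fin n → R ⧸ powerIdeal x t) :=
    LinearMap.pi fun r => (Submodule.mkQ (powerIdeal x t)).comp (LinearMap.proj r)
  have hker : W ≤ LinearMap.ker g0 := by
    intro z hz
    rw [LinearMap.mem_ker]
    ext r
    simp only [g0, LinearMap.pi_apply, LinearMap.comp_apply, LinearMap.proj_apply,
      Submodule.mkQ_apply, Pi.zero_apply]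
    rw [Submodule.Quotient.mk_eq_zero]
    exact (mem_smul_top_pi _ _).1 hz r
  let g : ((Fin n → R) ⧸ W) →ₗ[R] (Fin n → R ⧸ powerIdeal x t) := Submodule.liftQ W g0 hker
  have hg : Function.Surjective g := by
    intro y
    choose z hz using fun r => Submodule.mkQ_surjective _ (y r)
    refine ⟨W.mkQ z, ?_⟩
    change g0 z = y
    ext r
    exact hz r
  have h4 := Module.length_le_of_surjective
    ((g.comp (⊤ : Submodule R ((Fin n → R) ⧸ W)).subtype).restrictScalars B) (by
      intro y
      obtain ⟨z, rfl⟩ := hg y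
      exact ⟨⟨z, trivial⟩, rfl⟩)
  rw [Module.length_pi] at h4
  simpa using h4

theorem powerIdeal_powerIdeal {R : Type*} [CommRing R] {d : ℕ} (x : Fin d → R)
    (s m : Fin d → ℕ) :
    powerIdeal (fun i => x i ^ s i) m = powerIdeal x (fun i => s i * m i) := by
  simp [powerIdeal, pow_mul]

theorem length_powerIdeal_mul_le (B : Type*) {R : Type u} [CommRing B] [CommRing R] [Algebra B R]
    {d : ℕ} (x : Fin d → R) (s m : Fin d → ℕ) :
    Module.length B (R ⧸ powerIdeal x (fun i => s i * m i)) ≤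
      (∏ i, m i : ℕ) * Module.length B (R ⧸ powerIdeal x s) := by
  have h := ((hasQLFiltration_monomial (fun i => x i ^ s i) m 1).hasChain).length_le (B := B)
  rw [powerIdeal_powerIdeal, Nat.cast_one, one_mul, one_mul] at h
  exact h

theorem powerIdeal_anti {R : Type*} [CommRing R] {d : ℕ} (x : Fin d → R)
    {s m : Fin d → ℕ} (h : ∀ i, s i ≤ m i) : powerIdeal x m ≤ powerIdeal x s := by
  rw [powerIdeal, Ideal.span_le]
  rintro _ ⟨i, rfl⟩
  exact Ideal.mem_of_dvd _ (pow_dvd_pow _ (h i)) (Ideal.subset_span ⟨i, rfl⟩)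

theorem length_quot_anti (B : Type*) {R : Type*} [CommRing B] [CommRing R] [Algebra B R]
    {I J : Ideal R} (h : I ≤ J) : Module.length B (R ⧸ J) ≤ Module.length B (R ⧸ I) :=
  Module.length_le_of_surjective ((Ideal.Quotient.factorₐ B h).toLinearMap)
    (Ideal.Quotient.factor_surjective h)

theorem numeric_bound {d : ℕ} (f : (Fin d → ℕ) → ℕ) (p : ℕ) (hp : 2 ≤ p) (t : Fin d → ℕ)
    (ht : ∀ i, 0 < t i) (n h : ℕ)
    (hmono : ∀ s m : Fin d → ℕ, (∀ i, s i ≤ m i) → f s ≤ f m)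
    (hmul : ∀ s m : Fin d → ℕ, f (fun i => s i * m i) ≤ (∏ i, m i) * f s)
    (hch : ∀ e : ℕ, n * f (fun i => p ^ e * t i) ≤ h * f (fun _ => p ^ e))
    (c : ℝ) (hc : 0 < c) (N₀ : ℕ) (hlow : ∀ N : ℕ, N₀ ≤ N → c * (N : ℝ) ^ d ≤ f (fun _ => N)) :
    n * ∏ i, t i ≤ h := by
  classical
  by_contra hcon
  push Not at hcon
  have hnpos : 0 < n := by
    rcases Nat.eq_zero_or_pos n with h0 | h0
    · simp [h0] at hcon
    · exact h0
  have hp1 : (1 : ℝ) < p := by exact_mod_cast hp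
  have hlim : Filter.Tendsto (fun k : ℕ => (h : ℝ) * ∏ i, (1 / (t i : ℝ) + (1 / (p : ℝ)) ^ k))
      Filter.atTop (nhds ((h : ℝ) * ∏ i, (1 / (t i : ℝ) + 0))) := by
    refine Filter.Tendsto.const_mul _ (tendsto_finsetProd _ fun i _ => ?_)
    refine Filter.Tendsto.const_add _ ?_
    exact tendsto_pow_atTop_nhds_zero_of_lt_one (by positivity)
      (by rw [div_lt_one (by linarith)]; exact hp1)
  have hTpos : (0 : ℝ) < ∏ i, (t i : ℝ) := Finset.prod_pos fun i _ => by exact_mod_cast ht i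
  have hlt : (h : ℝ) * ∏ i, (1 / (t i : ℝ) + 0) < n := by
    have : ∏ i, (1 / (t i : ℝ) + 0) = (∏ i, (t i : ℝ))⁻¹ := by
      simp
    rw [this, ← div_eq_mul_inv, div_lt_iff₀ hTpos]
    exact_mod_cast hcon
  obtain ⟨k, hk⟩ := (hlim.eventually_lt_const hlt).exists
  set θ : ℝ := ((h : ℝ) * ∏ i, (1 / (t i : ℝ) + (1 / (p : ℝ)) ^ k)) / n with hθ
  have hnR : (0 : ℝ) < n := by exact_mod_cast hnpos
  have hθ1 : θ < 1 := by rw [hθ, div_lt_one hnR]; exact hk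
  have hθ0 : 0 ≤ θ := by
    rw [hθ]
    have : 0 ≤ ∏ i, (1 / (t i : ℝ) + (1 / (p : ℝ)) ^ k) :=
      Finset.prod_nonneg fun i _ => by positivity
    positivity
  have hstep : ∀ e : ℕ, (f (fun _ => p ^ (e + k)) : ℝ) ≤
      θ * ((p : ℝ) ^ k) ^ d * f (fun _ => p ^ e) := by
    intro e
    let m : Fin d → ℕ := fun i => p ^ k / t i + 1
    have h1 : f (fun _ => p ^ (e + k)) ≤ f (fun i => (p ^ e * t i) * m i) := by
      apply hmono
      intro i
      rw [pow_add, mul_assoc]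
      apply Nat.mul_le_mul_left
      have := Nat.lt_mul_div_succ (p ^ k) (ht i)
      exact this.le
    have h2 := hmul (fun i => p ^ e * t i) m
    have h3 := hch e
    have h4 : n * f (fun _ => p ^ (e + k)) ≤ (∏ i, m i) * (h * f (fun _ => p ^ e)) := by
      calc n * f (fun _ => p ^ (e + k)) ≤ n * ((∏ i, m i) * f (fun i => p ^ e * t i)) :=
            Nat.mul_le_mul_left _ (h1.trans h2)
        _ = (∏ i, m i) * (n * f (fun i => p ^ e * t i)) := by ring
        _ ≤ _ := Nat.mul_le_mul_left _ h3
    have h5 : ((∏ i, m i : ℕ) : ℝ) ≤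
        ((p : ℝ) ^ k) ^ d * ∏ i, (1 / (t i : ℝ) + (1 / (p : ℝ)) ^ k) := by
      have hd : ((p : ℝ) ^ k) ^ d = ∏ _i : Fin d, ((p : ℝ) ^ k) := by simp
      rw [hd, ← Finset.prod_mul_distrib]
      push_cast
      apply Finset.prod_le_prod
      · intro i _; positivity
      · intro i _
        have h6 : ((p ^ k / t i : ℕ) : ℝ) ≤ (p : ℝ) ^ k / t i := by
          have := @Nat.cast_div_le ℝ _ _ _ (p ^ k) (t i)
          simpa using this
        have h7 : (p : ℝ) ^ k * (1 / (p : ℝ)) ^ k = 1 := by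
          rw [← mul_pow, mul_one_div_cancel (by positivity), one_pow]
        simp only [m]
        push_cast
        rw [mul_add, h7, mul_one_div]
        linarith
    have h4' : (n : ℝ) * f (fun _ => p ^ (e + k)) ≤
        ((∏ i, m i : ℕ) : ℝ) * (h * f (fun _ => p ^ e)) := by exact_mod_cast h4
    have h8 : (n : ℝ) * f (fun _ => p ^ (e + k)) ≤
        (((p : ℝ) ^ k) ^ d * ∏ i, (1 / (t i : ℝ) + (1 / (p : ℝ)) ^ k)) *
          (h * f (fun _ => p ^ e)) :=
      h4'.trans (mul_le_mul_of_nonneg_right h5 (by positivity))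
    rw [hθ]
    rw [div_mul_eq_mul_div, div_mul_eq_mul_div, le_div_iff₀ hnR]
    calc _ = (n : ℝ) * f (fun _ => p ^ (e + k)) := by ring
      _ ≤ _ := h8
      _ = _ := by ring
  have hiter : ∀ j : ℕ, (f (fun _ => p ^ (j * k)) : ℝ) ≤
      θ ^ j * ((p : ℝ) ^ (j * k)) ^ d * f (fun _ => 1) := by
    intro j
    induction j with
    | zero => simp
    | succ j ih =>
      have h1 := hstep (j * k)
      rw [show (j + 1) * k = j * k + k by ring]
      refine h1.trans ?_
      calc θ * ((p : ℝ) ^ k) ^ d * f (fun _ => p ^ (j * k))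
          ≤ θ * ((p : ℝ) ^ k) ^ d * (θ ^ j * ((p : ℝ) ^ (j * k)) ^ d * f (fun _ => 1)) :=
            mul_le_mul_of_nonneg_left ih (by positivity)
        _ = _ := by rw [pow_add (p : ℝ), mul_pow, pow_succ θ]; ring
  rcases Nat.eq_zero_or_pos d with hd0 | hd0
  · subst hd0
    have h1 := hch 0
    have h2 : (fun i : Fin 0 => p ^ 0 * t i) = (fun _ => p ^ 0) := by
      ext i; exact i.elim0
    rw [h2] at h1
    have h3 := hlow (max N₀ 1) (le_max_left _ _)
    have h4 : (fun _ : Fin 0 => max N₀ 1) = (fun _ => p ^ 0) := by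
      ext i; exact i.elim0
    rw [h4] at h3
    have h5 : (0 : ℝ) < f (fun _ : Fin 0 => p ^ 0) := lt_of_lt_of_le (by positivity) h3
    have h6 : 0 < f (fun _ : Fin 0 => p ^ 0) := by exact_mod_cast h5
    have h7 : n ≤ h := Nat.le_of_mul_le_mul_right h1 h6
    simp at hcon
    omega
  have hkpos : 0 < k := by
    rcases Nat.eq_zero_or_pos k with h0 | h0
    · exfalso
      subst h0
      have h1 : (f (fun _ => p ^ N₀) : ℝ) ≤ θ * f (fun _ => p ^ N₀) := by
        simpa using hstep N₀
      have hN : N₀ ≤ p ^ N₀ := (Nat.lt_pow_self (by omega)).le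
      have h2 := hlow (p ^ N₀) hN
      have h3 : (0 : ℝ) < f (fun _ => p ^ N₀) := by
        refine lt_of_lt_of_le ?_ h2
        have : (0 : ℝ) < ((p ^ N₀ : ℕ) : ℝ) := by positivity
        positivity
      nlinarith
    · exact h0
  have hz : Filter.Tendsto (fun j : ℕ => θ ^ j * (f (fun _ => 1) : ℝ)) Filter.atTop
      (nhds (0 * (f (fun _ => 1) : ℝ))) :=
    (tendsto_pow_atTop_nhds_zero_of_lt_one hθ0 hθ1).mul_const _
  rw [zero_mul] at hz
  obtain ⟨j, hj, hjN⟩ := ((hz.eventually_lt_const hc).and (Filter.eventually_ge_atTop N₀)).exists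
  have hN : N₀ ≤ p ^ (j * k) := by
    calc N₀ ≤ j := hjN
      _ ≤ j * k := Nat.le_mul_of_pos_right _ hkpos
      _ ≤ p ^ (j * k) := (Nat.lt_pow_self (by omega)).le
  have h1 := (hlow _ hN).trans (hiter j)
  push_cast at h1
  have h2 : (0 : ℝ) < ((p : ℝ) ^ (j * k)) ^ d := by positivity
  have h3 : θ ^ j * ((p : ℝ) ^ (j * k)) ^ d * (f (fun _ => 1) : ℝ) =
      (θ ^ j * (f (fun _ => 1) : ℝ)) * ((p : ℝ) ^ (j * k)) ^ d := by ring
  rw [h3] at h1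
  have := le_of_mul_le_mul_right h1 h2
  linarith

theorem length_powerIdeal_ne_top (B : Type*) {R : Type u} [CommRing B] [CommRing R] [Algebra B R]
    {d : ℕ} (x : Fin d → R) (hfin : Module.length B (R ⧸ Ideal.span (Set.range x)) ≠ ⊤)
    (s : Fin d → ℕ) : Module.length B (R ⧸ powerIdeal x s) ≠ ⊤ := by
  have h := length_powerIdeal_mul_le B x (fun _ => 1) s
  have h1 : powerIdeal x (fun _ => 1) = Ideal.span (Set.range x) := by simp [powerIdeal]
  have h2 : (fun i => (fun _ => 1 : Fin d → ℕ) i * s i) = s := by funext i; simp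
  rw [h1, h2] at h
  refine ne_top_of_le_ne_top ?_ h
  exact WithTop.mul_ne_top (ENat.natCast_ne_top _) hfin

/-- The lower bound in positive characteristic. -/
theorem chain_bound_charP (B : Type*) {R : Type u} [CommRing B] [CommRing R] [Algebra B R]
    (p : ℕ) (hp : p.Prime) [CharP R p] {d : ℕ} (x : Fin d → R) (t : Fin d → ℕ)
    (ht : ∀ i, 0 < t i) (n h : ℕ) (H : HasChain R x t n h)
    (hfin : Module.length B (R ⧸ Ideal.span (Set.range x)) ≠ ⊤)
    (c : ℝ) (hc : 0 < c) (N₀ : ℕ)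
    (hlow : ∀ N : ℕ, N₀ ≤ N →
      c * (N : ℝ) ^ d ≤ (Module.length B (R ⧸ powerIdeal x (fun _ => N))).toNat) :
    n * ∏ i, t i ≤ h := by
  have hft := length_powerIdeal_ne_top B x hfin
  refine numeric_bound (fun s => (Module.length B (R ⧸ powerIdeal x s)).toNat) p hp.two_le t ht n h
    ?_ ?_ ?_ c hc N₀ hlow
  · intro s m hsm
    exact ENat.toNat_le_toNat (length_quot_anti B (powerIdeal_anti x hsm)) (hft m)
  · intro s m
    have := ENat.toNat_le_toNat (length_powerIdeal_mul_le B x s m)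
      (WithTop.mul_ne_top (ENat.natCast_ne_top _) (hft s))
    simpa using this
  · intro e
    haveI : Fact p.Prime := ⟨hp⟩
    have h1 := (H.map (iterateFrobenius R p e)).length_le (B := B)
    have h2 : (fun i => iterateFrobenius R p e (x i)) = fun i => x i ^ (fun _ : Fin d => p ^ e) i := by
      ext i
      simp [iterateFrobenius_def]
    rw [h2, powerIdeal_powerIdeal] at h1
    have h3 : Ideal.span (Set.range fun i => x i ^ (fun _ : Fin d => p ^ e) i) =
      powerIdeal x (fun _ => p ^ e) := rfl
    rw [h3] at h1
    have := ENat.toNat_le_toNat h1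
      (WithTop.mul_ne_top (ENat.natCast_ne_top _) (hft _))
    simpa using this


theorem exists_prime_le_ringKrullDim {R : Type*} [CommRing R] (d : ℕ)
    (h : (d : WithBot ℕ∞) ≤ ringKrullDim R) :
    ∃ P : Ideal R, P.IsPrime ∧ (d : WithBot ℕ∞) ≤ ringKrullDim (R ⧸ P) := by
  obtain ⟨l, hl⟩ := Order.le_krullDim_iff.1 h
  refine ⟨l.head.asIdeal, l.head.isPrime, ?_⟩
  rw [ringKrullDim_quotient, Order.le_krullDim_iff]
  refine ⟨⟨l.length, fun i => ⟨l i, ?_⟩, fun i => ?_⟩, hl⟩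
  · have : l.head ≤ l i := LTSeries.head_le l i
    exact this
  · exact l.step i

theorem length_quot_of_surjective {R S : Type*} [CommRing R] [CommRing S] [Algebra R S]
    (hs : Function.Surjective (algebraMap R S)) (I : Ideal R) (J : Ideal S)
    (hIJ : I.map (algebraMap R S) ≤ J) :
    Module.length S (S ⧸ J) ≤ Module.length R (R ⧸ I) := by
  rw [← Module.length_eq_of_surjective (S := R) (R := S) (M := S ⧸ J) hs]
  let f : (R ⧸ I) →ₐ[R] (S ⧸ J) := Ideal.quotientMapₐ J (Algebra.ofId R S)
    (Ideal.map_le_iff_le_comap.1 hIJ)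
  refine Module.length_le_of_surjective f.toLinearMap ?_
  intro y
  obtain ⟨y, rfl⟩ := Ideal.Quotient.mk_surjective y
  obtain ⟨r, rfl⟩ := hs y
  exact ⟨Ideal.Quotient.mk I r, rfl⟩

theorem length_pow_step {R : Type*} [CommRing R] [IsDomain R] [IsNoetherianRing R]
    (m : Ideal R) (x : R) (hx : x ≠ 0) :
    ∃ k : ℕ, 0 < k ∧ ∀ n, k ≤ n →
      Module.length R (R ⧸ m ^ (n - k)) + Module.length R (R ⧸ (m ^ n ⊔ Ideal.span {x})) ≤
        Module.length R (R ⧸ m ^ n) := by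
  obtain ⟨k, hk⟩ := Ideal.exists_pow_inf_eq_pow_smul (M := R) m (Ideal.span {x})
  refine ⟨k + 1, Nat.succ_pos _, fun n hn => ?_⟩
  have h1 : ∀ a, x * a ∈ m ^ n → a ∈ m ^ (n - (k + 1)) := by
    intro a ha
    have h2 : x * a ∈ (m ^ n • ⊤ ⊓ Ideal.span {x} : Ideal R) := by
      refine ⟨?_, Ideal.mem_span_singleton.2 ⟨a, rfl⟩⟩
      simpa using ha
    rw [hk n (by omega)] at h2
    have h3 : x * a ∈ (m ^ (n - k) * Ideal.span {x} : Ideal R) :=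
      Submodule.smul_mono le_rfl inf_le_right h2
    rw [Ideal.mem_mul_span_singleton] at h3
    obtain ⟨z, hz, hzx⟩ := h3
    have : z = a := mul_right_cancel₀ hx (by rw [hzx, mul_comm])
    rw [this] at hz
    exact Ideal.pow_le_pow_right (by omega) hz
  -- colon ideal
  let f : R →ₗ[R] (R ⧸ m ^ n) := (m ^ n).mkQ.comp (LinearMap.mulLeft R x)
  have hf : LinearMap.ker f ≤ m ^ (n - (k + 1)) := by
    intro a ha
    refine h1 a ?_
    exact (Submodule.Quotient.mk_eq_zero _).1 ha
  have h4 : Module.length R (R ⧸ m ^ (n - (k + 1))) ≤ Module.length R (LinearMap.range f) := by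
    rw [← (f.quotKerEquivRange).length_eq]
    exact Module.length_le_of_surjective (Submodule.factor hf) (Submodule.factor_surjective hf)
  have h5 : Module.length R (R ⧸ (m ^ n ⊔ Ideal.span {x})) ≤
      Module.length R ((R ⧸ m ^ n) ⧸ LinearMap.range f) := by
    have hle : LinearMap.range f ≤
      LinearMap.ker (Submodule.factor (le_sup_left : m ^ n ≤ m ^ n ⊔ Ideal.span {x})) := by
      rintro _ ⟨a, rfl⟩
      rw [LinearMap.mem_ker]
      refine (Submodule.Quotient.mk_eq_zero _).2 ?_
      exact Ideal.mem_sup_right (Ideal.mem_span_singleton.2 ⟨a, rfl⟩)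
    refine Module.length_le_of_surjective (Submodule.liftQ _ _ hle) ?_
    intro y
    obtain ⟨z, rfl⟩ := Submodule.factor_surjective (le_sup_left : m ^ n ≤ m ^ n ⊔ Ideal.span {x}) y
    exact ⟨Submodule.Quotient.mk z, rfl⟩
  have h6 := Module.length_eq_add_of_exact (LinearMap.range f).subtype (LinearMap.range f).mkQ
    (Subtype.val_injective) (Submodule.mkQ_surjective _)
    (LinearMap.exact_iff.2 (by rw [Submodule.ker_mkQ, Submodule.range_subtype]))
  rw [h6]
  exact add_le_add h4 h5

theorem pow_sub_bound (n k d : ℕ) (hk : k ≤ n) :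
    n ^ (d + 1) ≤ (n - k) ^ (d + 1) + (d + 1) * k * n ^ d := by
  obtain ⟨m, rfl⟩ := Nat.exists_eq_add_of_le hk
  rw [Nat.add_sub_cancel_left]
  induction d with
  | zero => simp; omega
  | succ d ih =>
    have h1 : m ^ (d + 1) ≤ (k + m) ^ (d + 1) := Nat.pow_le_pow_left (by omega) _
    calc (k + m) ^ (d + 1 + 1) = m * (k + m) ^ (d + 1) + k * (k + m) ^ (d + 1) := by ring
      _ ≤ m * (m ^ (d + 1) + (d + 1) * k * (k + m) ^ d) + k * (k + m) ^ (d + 1) := by gcongr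
      _ = m ^ (d + 1 + 1) + (d + 1) * k * (m * (k + m) ^ d) + k * (k + m) ^ (d + 1) := by ring
      _ ≤ m ^ (d + 1 + 1) + (d + 1) * k * ((k + m) * (k + m) ^ d) + k * (k + m) ^ (d + 1) := by
        gcongr; omega
      _ = _ := by ring

theorem length_pow_maximalIdeal_lower (d : ℕ) : ∀ (R : Type u) [CommRing R] [IsLocalRing R]
    [IsNoetherianRing R], (d : WithBot ℕ∞) ≤ ringKrullDim R → ∃ K : ℕ, ∀ n : ℕ, 0 < n →
      ((n ^ d : ℕ) : ℕ∞) ≤ K * Module.length R (R ⧸ (IsLocalRing.maximalIdeal R) ^ n) := by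
  induction d with
  | zero =>
    intro R _ _ _ _
    refine ⟨1, fun n hn => ?_⟩
    have : Nontrivial (R ⧸ (IsLocalRing.maximalIdeal R) ^ n) := by
      rw [Ideal.Quotient.nontrivial_iff]
      intro h
      have := Ideal.pow_le_self (I := IsLocalRing.maximalIdeal R) hn.ne'
      rw [h] at this
      exact (IsLocalRing.maximalIdeal.isMaximal R).ne_top (top_le_iff.1 this)
    have := Module.length_pos (R := R) (M := R ⧸ (IsLocalRing.maximalIdeal R) ^ n)
    simpa using Order.one_le_iff_pos.2 this
  | succ d ih =>
    intro R _ _ _ hdim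
    obtain ⟨P, hP, hPd⟩ := exists_prime_le_ringKrullDim (d + 1) hdim
    have hloc : IsLocalRing (R ⧸ P) :=
      IsLocalRing.of_surjective' (Ideal.Quotient.mk P) Ideal.Quotient.mk_surjective
    obtain ⟨x, hxm, hx0⟩ : ∃ x ∈ IsLocalRing.maximalIdeal (R ⧸ P), x ≠ 0 := by
      by_contra! hcon
      have hbot : IsLocalRing.maximalIdeal (R ⧸ P) = ⊥ := by
        rw [eq_bot_iff]; intro y hy; exact hcon y hy
      have hF : IsField (R ⧸ P) := IsLocalRing.isField_iff_maximalIdeal_eq.2 hbot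
      rw [ringKrullDim_eq_zero_of_isField hF] at hPd
      have : ((d + 1 : ℕ) : WithBot ℕ∞) ≤ ((0 : ℕ) : WithBot ℕ∞) := by simpa using hPd
      rw [Nat.cast_le] at this
      omega
    let Q := (R ⧸ P) ⧸ Ideal.span {x}
    have hQn : Nontrivial Q := by
      rw [Ideal.Quotient.nontrivial_iff]
      intro h
      have : Ideal.span {x} ≤ IsLocalRing.maximalIdeal (R ⧸ P) := by
        rw [Ideal.span_singleton_le_iff_mem]; exact hxm
      rw [h] at this
      exact (IsLocalRing.maximalIdeal.isMaximal _).ne_top (top_le_iff.1 this)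
    have hlocQ : IsLocalRing Q :=
      IsLocalRing.of_surjective' (Ideal.Quotient.mk _) Ideal.Quotient.mk_surjective
    have hdimQ : (d : WithBot ℕ∞) ≤ ringKrullDim Q := by
      have := ringKrullDim_quotient_span_singleton_succ_eq_ringKrullDim_of_mem_nonZeroDivisors
        (R := R ⧸ P) (x := x) (mem_nonZeroDivisors_of_ne_zero hx0) hxm
      rw [← this] at hPd
      have h2 : (d : WithBot ℕ∞) + 1 ≤ ringKrullDim Q + 1 := by
        push_cast at hPd; exact hPd
      exact ENat.WithBot.add_le_add_one_right_iff.1 h2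
    obtain ⟨K, hK⟩ := ih Q hdimQ
    obtain ⟨k, hk0, hk⟩ := length_pow_step (IsLocalRing.maximalIdeal (R ⧸ P)) x hx0
    refine ⟨(d + 1) * k * K, ?_⟩
    have hQ : ∀ n, Module.length Q (Q ⧸ (IsLocalRing.maximalIdeal Q) ^ n) ≤
        Module.length (R ⧸ P) ((R ⧸ P) ⧸
          ((IsLocalRing.maximalIdeal (R ⧸ P)) ^ n ⊔ Ideal.span {x})) := by
      intro n
      refine length_quot_of_surjective (R := R ⧸ P) (S := Q) Ideal.Quotient.mk_surjective _ _ ?_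
      rw [Ideal.map_sup, Ideal.map_pow]
      refine sup_le (Ideal.pow_right_mono ?_ n) ?_
      · exact ((IsLocalRing.local_hom_TFAE (algebraMap (R ⧸ P) Q)).out 0 2).1
          (IsLocalHom.of_surjective _ Ideal.Quotient.mk_surjective)
      · rw [Ideal.map_le_iff_le_comap, Ideal.span_singleton_le_iff_mem, Ideal.mem_comap]
        have : algebraMap (R ⧸ P) Q x = 0 :=
          Ideal.Quotient.eq_zero_iff_mem.2 (Ideal.mem_span_singleton_self x)
        rw [this]; exact Ideal.zero_mem _
    have main : ∀ n : ℕ, 0 < n → ((n ^ (d + 1) : ℕ) : ℕ∞) ≤ (((d + 1) * k * K : ℕ) : ℕ∞) *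
        Module.length (R ⧸ P) ((R ⧸ P) ⧸ (IsLocalRing.maximalIdeal (R ⧸ P)) ^ n) := by
      intro n
      induction n using Nat.strong_induction_on with
      | _ n IH =>
        intro hn
        have hg := (hK n hn).trans (mul_le_mul_right (hQ n) _)
        set g := Module.length (R ⧸ P) ((R ⧸ P) ⧸
          ((IsLocalRing.maximalIdeal (R ⧸ P)) ^ n ⊔ Ideal.span {x}))
        rcases Nat.lt_or_ge k n with hkn | hkn
        · have h1 := hk n hkn.le
          have h2 := IH (n - k) (by omega) (by omega)
          have h3 : ((n ^ (d + 1) : ℕ) : ℕ∞) ≤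
              (((n - k) ^ (d + 1) + (d + 1) * k * n ^ d : ℕ) : ℕ∞) := by
            exact_mod_cast pow_sub_bound n k d hkn.le
          refine h3.trans ?_
          refine le_trans ?_ (mul_le_mul_right h1 _)
          rw [mul_add, Nat.cast_add]
          refine add_le_add h2 ?_
          rw [Nat.cast_mul, Nat.cast_mul ((d + 1) * k) K, mul_assoc]
          exact mul_le_mul_right hg _
        · have h3 : ((n ^ (d + 1) : ℕ) : ℕ∞) ≤ (((d + 1) * k * n ^ d : ℕ) : ℕ∞) := by
            norm_cast
            rw [pow_succ, mul_comm]
            have : n ≤ (d + 1) * k := hkn.trans (Nat.le_mul_of_pos_left _ (by omega))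
            exact Nat.mul_le_mul_right _ this
          refine h3.trans ?_
          rw [Nat.cast_mul, Nat.cast_mul ((d + 1) * k) K, mul_assoc]
          refine mul_le_mul_right (hg.trans (mul_le_mul_right ?_ _)) _
          exact length_quot_anti _ le_sup_left
    intro n hn
    refine (main n hn).trans (mul_le_mul_right ?_ _)
    refine length_quot_of_surjective (R := R) (S := R ⧸ P) Ideal.Quotient.mk_surjective _ _ ?_
    rw [Ideal.map_pow]
    refine Ideal.pow_right_mono ?_ n
    exact ((IsLocalRing.local_hom_TFAE (algebraMap R (R ⧸ P))).out 0 2).1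
      (IsLocalHom.of_surjective _ Ideal.Quotient.mk_surjective)


theorem length_ne_top_of_radical {R : Type*} [CommRing R] [IsLocalRing R] [IsNoetherianRing R]
    (I : Ideal R) (hI : I.radical = IsLocalRing.maximalIdeal R) :
    Module.length R (R ⧸ I) ≠ ⊤ := by
  have : IsArtinianRing (R ⧸ I) := by
    refine IsLocalRing.quotient_artinian_of_mem_minimalPrimes_of_isLocalRing I ?_
    rw [← Ideal.radical_minimalPrimes, hI, Ideal.minimalPrimes_eq_subsingleton_self]
    rfl
  rw [Module.length_eq_of_surjective (S := R) (R := R ⧸ I) (M := R ⧸ I)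
    Ideal.Quotient.mk_surjective]
  exact Module.length_ne_top

theorem powerIdeal_le_pow {R : Type*} [CommRing R] {d : ℕ} (x : Fin d → R) (m : Ideal R)
    (hx : ∀ i, x i ∈ m) (N : ℕ) : powerIdeal x (fun _ => N) ≤ m ^ N := by
  rw [powerIdeal, Ideal.span_le]
  rintro _ ⟨i, rfl⟩
  exact Ideal.pow_mem_pow (hx i) N

theorem length_lower_real {R : Type u} [CommRing R] [IsLocalRing R] [IsNoetherianRing R] {d : ℕ}
    (hd : (d : WithBot ℕ∞) ≤ ringKrullDim R) (x : Fin d → R)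
    (hx : ∀ i, x i ∈ IsLocalRing.maximalIdeal R)
    (hfin : Module.length R (R ⧸ Ideal.span (Set.range x)) ≠ ⊤) :
    ∃ c : ℝ, 0 < c ∧ ∀ N : ℕ, 1 ≤ N →
      c * (N : ℝ) ^ d ≤ (Module.length R (R ⧸ powerIdeal x (fun _ => N))).toNat := by
  obtain ⟨K, hK⟩ := length_pow_maximalIdeal_lower d R hd
  refine ⟨1 / (K + 1), by positivity, fun N hN => ?_⟩
  have h1 := (hK N hN).trans (mul_le_mul_right
    (length_quot_anti R (powerIdeal_le_pow x _ hx N)) _)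
  have h2 := length_powerIdeal_ne_top R x hfin (fun _ => N)
  generalize Module.length R (R ⧸ powerIdeal x (fun _ => N)) = L at h1 h2
  lift L to ℕ using h2
  have h3 : N ^ d ≤ K * L := by exact_mod_cast h1
  have h4 : (N : ℝ) ^ d ≤ K * L := by exact_mod_cast h3
  rw [ENat.toNat_natCast, div_mul_eq_mul_div, div_le_iff₀ (by positivity)]
  nlinarith [(Nat.cast_nonneg L : (0 : ℝ) ≤ L)]

/-- The lower bound for local rings of positive characteristic. -/
theorem chain_bound_local_charP {R : Type u} [CommRing R] [IsLocalRing R] [IsNoetherianRing R]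
    (p : ℕ) (hp : p.Prime) [CharP R p] {d : ℕ} (hd : (d : WithBot ℕ∞) ≤ ringKrullDim R)
    (x : Fin d → R) (hx : ∀ i, x i ∈ IsLocalRing.maximalIdeal R)
    (hxp : (Ideal.span (Set.range x)).radical = IsLocalRing.maximalIdeal R)
    (t : Fin d → ℕ) (ht : ∀ i, 0 < t i) (n h : ℕ) (H : HasChain R x t n h) :
    n * ∏ i, t i ≤ h := by
  have hfin := length_ne_top_of_radical _ hxp
  obtain ⟨c, hc, hlow⟩ := length_lower_real hd x hx hfin
  exact chain_bound_charP R p hp x t ht n h H hfin c hc 1 hlow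


theorem quasilength_eq_of_bound {R : Type u} [CommRing R] {d : ℕ} (x : Fin d → R)
    (t : Fin d → ℕ) (n : ℕ) (H : ∀ h, HasChain R x t n h → n * ∏ i, t i ≤ h) :
    quasilength R (Ideal.span (Set.range x))
      ((Fin n → R) ⧸ (powerIdeal x t • (⊤ : Submodule R (Fin n → R)))) =
      ((n * ∏ i, t i : ℕ) : ℕ∞) := by
  apply le_antisymm
  · exact sInf_le ⟨_, rfl, hasQLFiltration_monomial x t n⟩
  · refine le_sInf ?_
    rintro _ ⟨h, rfl, hh⟩
    exact_mod_cast H h hh.hasChain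

theorem content_eq_of_bound {R : Type u} [CommRing R] {d : ℕ} (x : Fin d → R) (n : ℕ)
    (H : ∀ t : Fin d → ℕ, (∀ i, 0 < t i) → ∀ h, HasChain R x t n h → n * ∏ i, t i ≤ h) :
    content x (Fin n → R) = n := by
  have key : ∀ s : ℕ, (⨅ t : {t : Fin d → ℕ // ∀ i, s ≤ t i ∧ 0 < t i},
    (quasilength R (Ideal.span (Set.range x))
        ((Fin n → R) ⧸ (powerIdeal x (t : Fin d → ℕ) • (⊤ : Submodule R (Fin n → R)))) : ℝ≥0∞) /
      ∏ i, ((t : Fin d → ℕ) i : ℝ≥0∞)) = n := by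
    intro s
    have : Nonempty {t : Fin d → ℕ // ∀ i, s ≤ t i ∧ 0 < t i} :=
      ⟨⟨fun _ => s + 1, fun i => ⟨Nat.le_succ s, Nat.succ_pos s⟩⟩⟩
    rw [← ciInf_const (ι := {t : Fin d → ℕ // ∀ i, s ≤ t i ∧ 0 < t i}) (a := (n : ℝ≥0∞))]
    refine iInf_congr fun t => ?_
    rw [quasilength_eq_of_bound x t n (H t fun i => (t.2 i).2)]
    have h0 : (∏ i, ((t : Fin d → ℕ) i : ℝ≥0∞)) ≠ 0 := by
      rw [Finset.prod_ne_zero_iff]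
      intro i _
      exact_mod_cast (t.2 i).2.ne'
    have ht : (∏ i, ((t : Fin d → ℕ) i : ℝ≥0∞)) ≠ ⊤ :=
      ENNReal.prod_ne_top fun i _ => ENNReal.natCast_ne_top _
    have h1 : (((n * ∏ i, (t : Fin d → ℕ) i : ℕ) : ℕ∞) : ℝ≥0∞) =
        n * ∏ i, ((t : Fin d → ℕ) i : ℝ≥0∞) := by
      rw [ENat.toENNReal_coe]; push_cast; ring
    rw [h1, ENNReal.mul_div_cancel_right h0 ht]
  unfold content
  simp only [key]
  exact ciSup_const


open Polynomial in
theorem exists_primitive_integral (P S : Type*) [CommRing P] [IsDomain P] [IsIntegrallyClosed P]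
    [CharZero P] [CommRing S] [IsDomain S] [Algebra P S] [FaithfulSMul P S]
    [Algebra.IsAlgebraic P S] [Algebra.FiniteType P S] :
    ∃ θ : S, IsIntegral P θ ∧ aeval θ (derivative (minpoly P θ)) ≠ 0 ∧
      ∀ s : S, ∃ g : P, g ≠ 0 ∧ ∃ H : P[X], algebraMap P S g * s = aeval θ H := by
  let k := FractionRing P
  let E := FractionRing S
  have hPE : FaithfulSMul P E := by
    rw [faithfulSMul_iff_algebraMap_injective, IsScalarTower.algebraMap_eq P S E]
    exact (IsFractionRing.injective S E).comp (FaithfulSMul.algebraMap_injective P S)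
  let _ : Algebra k E := FractionRing.liftAlgebra P E
  have : IsScalarTower P k E := FractionRing.isScalarTower_liftAlgebra P E
  have hSE : Function.Injective (algebraMap S E) := IsFractionRing.injective S E
  have hPk : Function.Injective (algebraMap P k) := IsFractionRing.injective P k
  have hchark : CharZero k := charZero_of_injective_algebraMap hPk
  have halgS : Algebra.IsAlgebraic P E :=
    have : Algebra.IsAlgebraic S E := IsLocalization.isAlgebraic E (nonZeroDivisors S)
    Algebra.IsAlgebraic.trans P S E
  have halg : Algebra.IsAlgebraic k E := by
    exact (IsFractionRing.comap_isAlgebraic_iff (A := P) (K := k) (C := E)).1 inferInstance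
  have hess : Algebra.EssFiniteType k E := by
    have h1 : Algebra.EssFiniteType S E := Algebra.EssFiniteType.of_isLocalization _ (nonZeroDivisors S)
    have h2 : Algebra.EssFiniteType P E := Algebra.EssFiniteType.comp P S E
    exact Algebra.EssFiniteType.of_comp P k E
  have hfd : FiniteDimensional k E := by
    obtain ⟨s, hs⟩ := IntermediateField.fg_top k E
    have h1 : FiniteDimensional k (IntermediateField.adjoin k (s : Set E)) :=
      IntermediateField.finiteDimensional_adjoin fun x _ => (halg.isAlgebraic x).isIntegral
    rw [hs] at h1
    exact IntermediateField.topEquiv.toLinearEquiv.finiteDimensional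
  obtain ⟨α, hα⟩ := Field.exists_primitive_element k E
  -- scale into `S`
  obtain ⟨s, b, hb, hsb⟩ := IsFractionRing.div_surjective (A := S) α
  obtain ⟨r, hr0, s1, hs1⟩ := (Algebra.IsAlgebraic.isAlgebraic (R := P) b).exists_nonzero_dvd hb
  obtain ⟨y, hy0, hintg⟩ := (Algebra.IsAlgebraic.isAlgebraic (R := P) (s * s1)).exists_integral_multiple
  have hb0 : algebraMap S E b ≠ 0 := by
    rw [Ne, map_eq_zero_iff _ hSE]
    exact nonZeroDivisors.ne_zero hb
  refine ⟨y • (s * s1), hintg, ?_, ?_⟩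
  all_goals set θ := y • (s * s1) with hθ
  · have h1 := (Algebra.IsSeparable.isSeparable k (algebraMap S E θ)).aeval_derivative_ne_zero
      (minpoly.aeval k (algebraMap S E θ))
    rw [minpoly.isIntegrallyClosed_eq_field_fractions k E hintg, derivative_map,
      aeval_map_algebraMap, aeval_algebraMap_apply, Ne, map_eq_zero_iff _ hSE] at h1
    exact h1
  · have hθα : algebraMap S E θ = algebraMap k E (algebraMap P k (y * r)) * α := by
      rw [← IsScalarTower.algebraMap_apply P k E, ← hsb, hθ, Algebra.smul_def,
        IsScalarTower.algebraMap_apply P S E (y * r), map_mul, map_mul, map_mul, hs1]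
      simp only [map_mul]
      rw [mul_div_assoc', eq_div_iff hb0]
      ring
    have hyr : algebraMap k E (algebraMap P k (y * r)) ≠ 0 := by
      rw [Ne, map_eq_zero, map_eq_zero_iff _ hPk]
      exact mul_ne_zero hy0 hr0
    have htop : IntermediateField.adjoin k {algebraMap S E θ} = ⊤ := by
      rw [eq_top_iff, ← hα, IntermediateField.adjoin_le_iff, Set.singleton_subset_iff]
      have : α = (algebraMap k E (algebraMap P k (y * r)))⁻¹ * algebraMap S E θ := by
        rw [hθα, inv_mul_cancel_left₀ hyr]
      rw [this]
      exact mul_mem (inv_mem (IntermediateField.algebraMap_mem _ _))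
        (IntermediateField.mem_adjoin_simple_self _ _)
    have htop2 : Algebra.adjoin k {algebraMap S E θ} = ⊤ := by
      rw [← IntermediateField.adjoin_simple_toSubalgebra_of_isAlgebraic (halg.isAlgebraic _), htop,
        IntermediateField.top_toSubalgebra]
    intro s
    have hmem : algebraMap S E s ∈ Algebra.adjoin k {algebraMap S E θ} := by
      rw [htop2]; trivial
    rw [Algebra.adjoin_singleton_eq_range_aeval] at hmem
    obtain ⟨H', hH'⟩ := hmem
    obtain ⟨g, hg, hg1⟩ := IsLocalization.integerNormalization_spec (nonZeroDivisors P) H'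
    refine ⟨g, nonZeroDivisors.ne_zero hg, IsLocalization.integerNormalization (nonZeroDivisors P) H',
      hSE ?_⟩
    rw [← aeval_algebraMap_apply, ← aeval_map_algebraMap k, hg1, map_mul, ← hH',
      ← IsScalarTower.algebraMap_apply P S E]
    simp [Algebra.smul_def, IsScalarTower.algebraMap_apply P k E]


/-- evaluation of a polynomial over `ℤ[z]`. -/
noncomputable def evp {B : Type*} [CommRing B] {σ : Type*} (z : σ → B) (θ : B) :
    Polynomial (MvPolynomial σ ℤ) →+* B :=
  Polynomial.eval₂RingHom (MvPolynomial.aeval z : MvPolynomial σ ℤ →ₐ[ℤ] B).toRingHom θ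

theorem evp_C {B : Type*} [CommRing B] {σ : Type*} (z : σ → B) (θ : B) (g : MvPolynomial σ ℤ) :
    evp z θ (Polynomial.C g) = MvPolynomial.aeval z g := by
  simp [evp]

theorem evp_X {B : Type*} [CommRing B] {σ : Type*} (z : σ → B) (θ : B) :
    evp z θ Polynomial.X = θ := by
  simp [evp]

theorem map_aeval_int {B C : Type*} [CommRing B] [CommRing C] (h : B →+* C) {σ : Type*}
    (z : σ → B) (g : MvPolynomial σ ℤ) :
    h (MvPolynomial.aeval z g) = MvPolynomial.aeval (fun i => h (z i)) g := by
  induction g using MvPolynomial.induction_on with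
  | C a => simp
  | add p q hp hq => simp [hp, hq]
  | mul_X p i hp => simp [hp]

theorem map_evp {B C : Type*} [CommRing B] [CommRing C] (h : B →+* C) {σ : Type*} (z : σ → B)
    (θ : B) (H : Polynomial (MvPolynomial σ ℤ)) :
    h (evp z θ H) = evp (fun i => h (z i)) (h θ) H := by
  induction H using Polynomial.induction_on' with
  | add p q hp hq => simp [hp, hq]
  | monomial n a =>
    rw [← Polynomial.C_mul_X_pow_eq_monomial]
    simp only [map_mul, map_pow, evp_C, evp_X, map_aeval_int]

open Polynomial in
theorem evp_eq_eval_map {B : Type*} [CommRing B] {σ : Type*} (z : σ → B) (θ : B)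
    (H : Polynomial (MvPolynomial σ ℤ)) :
    evp z θ H = (H.map (MvPolynomial.aeval z : MvPolynomial σ ℤ →ₐ[ℤ] B).toRingHom).eval θ := by
  rw [Polynomial.eval_map]; rfl

theorem common_denominator {P S κ : Type*} [CommRing P] [IsDomain P] [CommRing S] [Algebra P S]
    [Fintype κ] (θ : S) (w : κ → S)
    (h : ∀ s : S, ∃ g : P, g ≠ 0 ∧ ∃ H : Polynomial P, algebraMap P S g * s = Polynomial.aeval θ H)
    (e : P) (he : e ≠ 0) :
    ∃ g : P, g ≠ 0 ∧ e ∣ g ∧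
      ∀ j, ∃ H : Polynomial P, algebraMap P S g * w j = Polynomial.aeval θ H := by
  classical
  choose g hg H hH using fun j => h (w j)
  refine ⟨e * ∏ j, g j, mul_ne_zero he (Finset.prod_ne_zero_iff.2 fun j _ => hg j),
    Dvd.intro _ rfl, fun j => ?_⟩
  refine ⟨Polynomial.C (e * ∏ i ∈ Finset.univ.erase j, g i) * H j, ?_⟩
  rw [map_mul (Polynomial.aeval θ), ← hH, ← Finset.mul_prod_erase _ _ (Finset.mem_univ j)]
  simp only [Polynomial.aeval_C, map_mul]
  ring

theorem structure_lemma (S : Type u) [CommRing S] [IsDomain S] [CharZero S] (f : S) (hf : f ≠ 0)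
    {κ : Type*} [Fintype κ] (w : κ → S) (hw : Algebra.adjoin ℤ (Set.range w) = ⊤) :
    ∃ (σ : Type u) (_ : Finite σ) (z : σ → S) (θ : S) (F : Polynomial (MvPolynomial σ ℤ))
      (g : MvPolynomial σ ℤ) (p : κ → Polynomial (MvPolynomial σ ℤ)) (c c' : S),
      evp z θ F = 0 ∧ c * evp z θ F.derivative = MvPolynomial.aeval z g ∧
      MvPolynomial.aeval z g ≠ 0 ∧ c' * f = MvPolynomial.aeval z g ∧
      (∀ j, MvPolynomial.aeval z g * w j = evp z θ (p j)) ∧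
      ∀ (B : Type u) [CommRing B] [IsDomain B] (z' : σ → B) (θ' : B) (b : κ → B),
        evp z' θ' F = 0 → MvPolynomial.aeval z' g ≠ 0 →
        (∀ j, MvPolynomial.aeval z' g * b j = evp z' θ' (p j)) →
        ∃ ψ : S →+* B, (∀ j, ψ (w j) = b j) ∧ ∀ i, ψ (z i) = z' i := by
  classical
  have hft : Algebra.FiniteType ℤ S := by
    refine ⟨⟨(Set.range w).toFinset, ?_⟩⟩
    simpa using hw
  have hfaith : FaithfulSMul ℤ S := by
    rw [faithfulSMul_iff_algebraMap_injective]
    exact Int.cast_injective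
  have halg0 : Algebra.IsAlgebraic (Algebra.adjoin ℤ (Set.range w)) S := by
    refine ⟨fun s => ?_⟩
    exact isAlgebraic_algebraMap (⟨s, by rw [hw]; trivial⟩ : Algebra.adjoin ℤ (Set.range w))
  obtain ⟨t, hts, htb⟩ := exists_isTranscendenceBasis_subset (R := ℤ) (Set.range w)
  have htfin : Finite t := (Set.finite_range w).subset hts
  let P := MvPolynomial t ℤ
  let zt : t → S := (↑)
  let _ : Algebra P S := (MvPolynomial.aeval zt : MvPolynomial t ℤ →ₐ[ℤ] S).toRingHom.toAlgebra
  have hPinj : Function.Injective (algebraMap P S) := htb.1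
  have hPS : FaithfulSMul P S := (faithfulSMul_iff_algebraMap_injective P S).2 hPinj
  have htow : IsScalarTower ℤ P S := inferInstance
  have hPalg : Algebra.IsAlgebraic P S := by
    have := htb.isAlgebraic
    exact Algebra.IsAlgebraic.of_ringHom_of_comp_eq (htb.1.aevalEquiv).toRingEquiv.toRingHom
      (RingHom.id S) (htb.1.aevalEquiv).surjective Function.injective_id rfl
  have hPft : Algebra.FiniteType P S := Algebra.FiniteType.of_restrictScalars_finiteType ℤ P S
  obtain ⟨θ, hintg, hder, hθ⟩ := exists_primitive_integral P S
  obtain ⟨e1, he1, c1, hc1⟩ := (hPalg.isAlgebraic f).exists_nonzero_dvd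
    (mem_nonZeroDivisors_of_ne_zero hf)
  obtain ⟨e2, he2, c2, hc2⟩ := (hPalg.isAlgebraic
    (Polynomial.aeval θ (Polynomial.derivative (minpoly P θ)))).exists_nonzero_dvd
    (mem_nonZeroDivisors_of_ne_zero hder)
  obtain ⟨g, hg0, ⟨e, rfl⟩, hgw⟩ := common_denominator θ w hθ (e1 * e2) (mul_ne_zero he1 he2)
  choose H hH using hgw
  have hevp : ∀ H : Polynomial P, evp zt θ H = Polynomial.aeval θ H := fun H => rfl
  have hgal : ∀ g : P, MvPolynomial.aeval zt g = algebraMap P S g := fun g => rfl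
  refine ⟨t, htfin, zt, θ, minpoly P θ, e1 * e2 * e, H, algebraMap P S (e1 * e) * c2,
    c1 * algebraMap P S (e2 * e), ?_, ?_, ?_, ?_, ?_, ?_⟩
  · rw [hevp, minpoly.aeval]
  · rw [hevp, hgal, map_mul, map_mul, map_mul, hc2]; ring
  · rw [hgal, Ne, map_eq_zero_iff _ hPinj]; exact hg0
  · rw [hgal, map_mul, map_mul, map_mul, hc1]; ring
  · intro j; rw [hevp, hgal]; exact hH j
  · intro B _ _ z' θ' b hF hg hb
    generalize e1 * e2 * e = G at hg hb hH hg0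
    have hC : evp z' θ' (Polynomial.C G) = MvPolynomial.aeval z' G := evp_C z' θ' G
    have hker : ∀ H H' : Polynomial P, Polynomial.aeval θ H = Polynomial.aeval θ H' →
        evp z' θ' H = evp z' θ' H' := by
      intro H H' h
      rw [← sub_eq_zero, ← map_sub] at h ⊢
      obtain ⟨Q, hQ⟩ := minpoly.isIntegrallyClosed_dvd hintg h
      rw [hQ, map_mul, hF, zero_mul]
    -- the comparison
    have claim : ∀ Q : MvPolynomial κ ℤ, ∃ (N : ℕ) (D : Polynomial P),
        Polynomial.aeval θ D = algebraMap P S G ^ N * MvPolynomial.aeval w Q ∧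
        evp z' θ' D = MvPolynomial.aeval z' G ^ N * MvPolynomial.aeval b Q := by
      intro Q
      induction Q using MvPolynomial.induction_on with
      | C a => exact ⟨0, (a : Polynomial P), by simp, by simp⟩
      | add Q1 Q2 h1 h2 =>
        obtain ⟨N1, D1, h1, h1'⟩ := h1
        obtain ⟨N2, D2, h2, h2'⟩ := h2
        refine ⟨N1 + N2, Polynomial.C G ^ N2 * D1 + Polynomial.C G ^ N1 * D2, ?_, ?_⟩
        · simp only [map_add, map_mul, map_pow, h1, h2, Polynomial.aeval_C]; ring
        · simp only [map_add, map_mul, map_pow, h1', h2', hC]; ring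
      | mul_X Q j h1 =>
        obtain ⟨N1, D1, h1, h1'⟩ := h1
        refine ⟨N1 + 1, D1 * H j, ?_, ?_⟩
        · simp only [map_mul, h1, ← hH, MvPolynomial.aeval_X]; ring
        · simp only [map_mul, h1', ← hb, MvPolynomial.aeval_X]; ring
    have hsurj : Function.Surjective (MvPolynomial.aeval w : MvPolynomial κ ℤ →ₐ[ℤ] S) := by
      rw [← AlgHom.range_eq_top, ← Algebra.adjoin_range_eq_range_aeval, hw]
    have hwd : ∀ Q : MvPolynomial κ ℤ, MvPolynomial.aeval w Q = 0 →
        MvPolynomial.aeval b Q = 0 := by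
      intro Q hQ
      obtain ⟨N, D, h1, h2⟩ := claim Q
      rw [hQ, mul_zero] at h1
      have h3 := hker D 0 (by rw [h1, map_zero])
      rw [h2, map_zero] at h3
      exact (mul_eq_zero.1 h3).resolve_left (pow_ne_zero _ hg)
    let ψ : S →+* B := RingHom.liftOfSurjective
      (MvPolynomial.aeval w : MvPolynomial κ ℤ →ₐ[ℤ] S).toRingHom hsurj
      ⟨(MvPolynomial.aeval b : MvPolynomial κ ℤ →ₐ[ℤ] B).toRingHom, fun Q hQ => hwd Q hQ⟩
    have hψ : ∀ Q : MvPolynomial κ ℤ, ψ (MvPolynomial.aeval w Q) = MvPolynomial.aeval b Q := by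
      intro Q
      exact RingHom.liftOfRightInverse_comp_apply _ _ _
        ⟨(MvPolynomial.aeval b : MvPolynomial κ ℤ →ₐ[ℤ] B).toRingHom, fun Q hQ => hwd Q hQ⟩ Q
    refine ⟨ψ, fun j => by simpa using hψ (MvPolynomial.X j), fun i => ?_⟩
    obtain ⟨Q, hQ⟩ := hsurj (zt i)
    obtain ⟨N, D, h1, h2⟩ := claim Q
    have h3 := hker D (Polynomial.C (G ^ N * MvPolynomial.X i)) (by
      rw [h1, Polynomial.aeval_C, map_mul, map_pow, hQ, ← hgal (MvPolynomial.X i),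
        MvPolynomial.aeval_X])
    have hX : evp z' θ' (Polynomial.C (G ^ N * MvPolynomial.X i)) =
        MvPolynomial.aeval z' G ^ N * z' i := by
      refine (evp_C z' θ' (G ^ N * MvPolynomial.X i)).trans ?_
      rw [map_mul, map_pow, MvPolynomial.aeval_X]
    rw [h2, hX] at h3
    have h4 := mul_left_cancel₀ (pow_ne_zero _ hg) h3
    rw [← hQ, hψ, h4]


theorem fixed_point_of_complete {A : Type*} [CommRing A] (I : Ideal A) [IsAdicComplete I A]
    (ε : A) (hε : ε ∈ I) (Q : Polynomial A) : ∃ u : A, u = 1 + ε * Q.eval u := by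
  let T : A → A := fun u => 1 + ε * Q.eval u
  let s : ℕ → A := fun n => T^[n] 0
  have hs : ∀ n, s (n + 1) = 1 + ε * Q.eval (s n) := fun n => by
    simp only [s, Function.iterate_succ_apply', T]
  have hT : ∀ a b n, a - b ∈ I ^ n → T a - T b ∈ I ^ (n + 1) := by
    intro a b n h
    have : T a - T b = ε * (Q.eval a - Q.eval b) := by simp only [T]; ring
    rw [this, pow_succ']
    refine Ideal.mul_mem_mul hε ?_
    obtain ⟨c, hc⟩ := Polynomial.sub_dvd_eval_sub a b Q
    rw [hc]; exact Ideal.mul_mem_right _ _ h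
  have hstep : ∀ n, s n - s (n + 1) ∈ I ^ n := by
    intro n
    induction n with
    | zero => simp
    | succ n ih =>
      have := hT _ _ _ ih
      have e1 : s (n + 1) = T (s n) := hs n
      have e2 : s (n + 1 + 1) = T (s (n + 1)) := hs (n + 1)
      rw [e2]; nth_rewrite 1 [e1]; exact this
  have hcau : ∀ m n, m ≤ n → s m - s n ∈ I ^ m := by
    intro m n h
    induction n, h using Nat.le_induction with
    | base => simp
    | succ n hmn ih =>
      have := Ideal.add_mem _ ih (Ideal.pow_le_pow_right hmn (hstep n))
      simpa using this
  obtain ⟨u, hu⟩ := IsPrecomplete.prec (I := I) (M := A) inferInstance (f := s) (by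
    intro m n h
    rw [SModEq.sub_mem]; simpa using hcau m n h)
  have hu' : ∀ n, s n - u ∈ I ^ n := fun n => by
    have := SModEq.sub_mem.1 (hu n); simpa using this
  refine ⟨u, ?_⟩
  rw [← sub_eq_zero]
  refine IsHausdorff.haus (I := I) (M := A) inferInstance _ fun n => ?_
  rw [SModEq.sub_mem, sub_zero]
  have h1 := hT _ _ _ (hu' n)
  have h2 := hu' (n + 1)
  have h3 : u - (1 + ε * Q.eval u) = -(s (n+1) - u) + (T (s n) - T u) := by
    rw [hs]; simp only [T]; ring
  rw [h3]
  have : -(s (n+1) - u) + (T (s n) - T u) ∈ I ^ (n + 1) :=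
    Ideal.add_mem _ (neg_mem h2) h1
  simpa using Ideal.pow_le_pow_right (Nat.le_succ n) this

theorem hensel_division {A : Type*} [CommRing A] (I : Ideal A) [IsAdicComplete I A]
    (F : Polynomial A) (θ ε : A) (hε : ε ∈ I)
    (h : F.eval θ = (F.derivative.eval θ) ^ 2 * ε) :
    ∃ θ' e : A, F.eval θ' = 0 ∧ θ' = θ + F.derivative.eval θ * ε * e := by
  set δ := F.derivative.eval θ with hδ
  -- Taylor expansion
  have htay : ∃ q : Polynomial A, ∀ y, F.eval (θ + δ * y) =
      F.eval θ + δ * (δ * y) + δ ^ 2 * y ^ 2 * q.eval y := by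
    let G := Polynomial.taylor θ F
    have hG : ∃ q : Polynomial A, G = Polynomial.C (F.eval θ) + Polynomial.C δ * Polynomial.X +
        Polynomial.X ^ 2 * q := by
      have h1 := Polynomial.divX_mul_X_add G
      have h2 := Polynomial.divX_mul_X_add G.divX
      refine ⟨G.divX.divX, ?_⟩
      have h0 : G.coeff 0 = F.eval θ := Polynomial.taylor_coeff_zero _ _
      have h3 : G.divX.coeff 0 = δ := by
        rw [Polynomial.coeff_divX]; exact Polynomial.taylor_coeff_one _ _
      rw [h0] at h1; rw [h3] at h2
      conv_lhs => rw [← h1, ← h2]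
      ring
    obtain ⟨q, hq⟩ := hG
    refine ⟨q.comp (Polynomial.C δ * Polynomial.X), fun y => ?_⟩
    have := congrArg (Polynomial.eval (δ * y)) hq
    rw [Polynomial.taylor_eval] at this
    rw [add_comm, this]
    simp; ring
  obtain ⟨q, hq⟩ := htay
  obtain ⟨u, hu⟩ := fixed_point_of_complete I ε hε
    (Polynomial.X ^ 2 * q.comp (-(Polynomial.C ε * Polynomial.X)))
  refine ⟨θ + δ * (-(ε * u)), -u, ?_, by ring⟩
  rw [hq, h]
  simp at hu
  linear_combination -δ^2 * ε * hu


theorem mvps_mem_span_X {k : Type*} [CommRing k] (d : ℕ) (f : MvPowerSeries (Fin d) k)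
    (hf : MvPowerSeries.constantCoeff f = 0) :
    f ∈ Ideal.span (Set.range (MvPowerSeries.X : Fin d → MvPowerSeries (Fin d) k)) := by
  induction d with
  | zero =>
    have : f = 0 := by
      ext m
      rw [Subsingleton.elim m 0, MvPowerSeries.coeff_zero_eq_constantCoeff_apply, hf, map_zero]
    rw [this]; exact zero_mem _
  | succ d ih =>
    let e := MvPowerSeries.finSuccEquiv k d
    have h0 := ih (PowerSeries.coeff 0 (e f)) (by
      rw [← MvPowerSeries.coeff_zero_eq_constantCoeff_apply,
        MvPowerSeries.coeff_coeff_finSuccEquiv, Finsupp.cons_zero_zero,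
        MvPowerSeries.coeff_zero_eq_constantCoeff_apply, hf])
    have h1 := Ideal.mem_map_of_mem (e.symm.toRingEquiv.toRingHom.comp PowerSeries.C) h0
    rw [Ideal.map_span] at h1
    have h2 : f = e.symm (PowerSeries.C (PowerSeries.coeff 0 (e f))) +
        e.symm (PowerSeries.mk fun n => PowerSeries.coeff (n+1) (e f)) * MvPowerSeries.X 0 := by
      apply e.injective
      rw [map_add, map_mul, e.apply_symm_apply, e.apply_symm_apply,
        MvPowerSeries.finSuccEquiv_X_zero]
      have := PowerSeries.eq_shift_mul_X_add_const (e f)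
      rw [PowerSeries.coeff_zero_eq_constantCoeff_apply]
      exact this.trans (add_comm _ _)
    rw [h2]
    refine Ideal.add_mem _ (Ideal.span_mono ?_ h1) (Ideal.mul_mem_left _ _
      (Ideal.subset_span ⟨0, rfl⟩))
    rintro _ ⟨_, ⟨i, rfl⟩, rfl⟩
    refine ⟨i.succ, ?_⟩
    apply e.injective
    change _ = e (e.symm _)
    rw [e.apply_symm_apply, MvPowerSeries.finSuccEquiv_X_succ]

theorem mvps_maximalIdeal (k : Type*) [Field k] (d : ℕ) :
    IsLocalRing.maximalIdeal (MvPowerSeries (Fin d) k) =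
      Ideal.span (Set.range (MvPowerSeries.X : Fin d → MvPowerSeries (Fin d) k)) := by
  apply le_antisymm
  · intro f hf
    apply mvps_mem_span_X
    by_contra h
    rw [IsLocalRing.mem_maximalIdeal, mem_nonunits_iff, MvPowerSeries.isUnit_iff_constantCoeff] at hf
    exact hf (isUnit_iff_ne_zero.2 h)
  · rw [Ideal.span_le]
    rintro _ ⟨i, rfl⟩
    rw [SetLike.mem_coe, IsLocalRing.mem_maximalIdeal, mem_nonunits_iff,
      MvPowerSeries.isUnit_iff_constantCoeff]
    simp

theorem mvps_complete (k : Type*) [Field k] (d : ℕ) :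
    IsAdicComplete (IsLocalRing.maximalIdeal (MvPowerSeries (Fin d) k))
      (MvPowerSeries (Fin d) k) := by
  rw [mvps_maximalIdeal]; infer_instance

theorem weierstrass_poly {A : Type*} [CommRing A] [IsLocalRing A]
    [IsAdicComplete (IsLocalRing.maximalIdeal A) A] (P : Polynomial A)
    (hP : P.IsDistinguishedAt (IsLocalRing.maximalIdeal A)) (a : PowerSeries A) :
    ∃ (r : Polynomial A) (q : PowerSeries A), a = (r : PowerSeries A) + (P : PowerSeries A) * q := by
  obtain ⟨r, hr⟩ := (hP.algEquivQuotient).surjective (Ideal.Quotient.mk _ a)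
  obtain ⟨r, rfl⟩ := Ideal.Quotient.mk_surjective r
  rw [Polynomial.IsDistinguishedAt.algEquivQuotient_apply] at hr
  have : (Ideal.Quotient.mk (Ideal.span {(P : PowerSeries A)})) (r : PowerSeries A) =
    Ideal.Quotient.mk _ a := by simpa using hr
  rw [Eq.comm, Ideal.Quotient.mk_eq_mk_iff_sub_mem, Ideal.mem_span_singleton'] at this
  obtain ⟨q, hq⟩ := this
  exact ⟨r, q, by linear_combination -hq⟩

theorem weierstrass_dvd {A : Type*} [CommRing A] [IsLocalRing A]
    [IsAdicComplete (IsLocalRing.maximalIdeal A) A] (P : Polynomial A)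
    (hP : P.IsDistinguishedAt (IsLocalRing.maximalIdeal A)) (a : Polynomial A)
    (h : (P : PowerSeries A) ∣ a) : P ∣ a := by
  rw [← Ideal.mem_span_singleton, ← Ideal.Quotient.eq_zero_iff_mem] at h ⊢
  apply (hP.algEquivQuotient).injective
  rw [map_zero, Polynomial.IsDistinguishedAt.algEquivQuotient_apply, ← h]
  simp


theorem mvps_leading_form (k : Type*) [Field k] (d N : ℕ) (G : MvPowerSeries (Fin d) k)
    (hG : G ∈ (IsLocalRing.maximalIdeal (MvPowerSeries (Fin d) k)) ^ N) :
    ∃ q : MvPolynomial (Fin d) k, q.IsHomogeneous N ∧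
      G - (q : MvPowerSeries (Fin d) k) ∈
        (IsLocalRing.maximalIdeal (MvPowerSeries (Fin d) k)) ^ (N + 1) := by
  set m := IsLocalRing.maximalIdeal (MvPowerSeries (Fin d) k) with hm
  have hconst : ∀ b : MvPowerSeries (Fin d) k,
      b - MvPowerSeries.C (MvPowerSeries.constantCoeff b) ∈ m := fun b => by
    rw [hm, mvps_maximalIdeal]; apply mvps_mem_span_X; simp
  induction N generalizing G with
  | zero =>
    refine ⟨MvPolynomial.C (MvPowerSeries.constantCoeff G), MvPolynomial.isHomogeneous_C _ _, ?_⟩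
    simpa using hconst G
  | succ N ih =>
    rw [pow_succ] at hG
    refine Submodule.mul_induction_on hG ?_ ?_
    · intro a ha b hb
      obtain ⟨q, hq, hq'⟩ := ih a ha
      have hb' := hb
      rw [hm, mvps_maximalIdeal, Ideal.mem_span_range_iff_exists_fun] at hb'
      obtain ⟨β, rfl⟩ := hb'
      refine ⟨q * ∑ i, MvPolynomial.C (MvPowerSeries.constantCoeff (β i)) * MvPolynomial.X i,
        hq.mul (MvPolynomial.IsHomogeneous.sum _ _ _ fun i _ => by
          simpa using (MvPolynomial.isHomogeneous_C _ _).mul (MvPolynomial.isHomogeneous_X k i)), ?_⟩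
      have h1 : (a - q) * (∑ i, β i * MvPowerSeries.X i) ∈ m ^ (N + 1 + 1) := by
        rw [pow_succ]; exact Ideal.mul_mem_mul hq' hb
      have hXm : ∀ i, (MvPowerSeries.X i : MvPowerSeries (Fin d) k) ∈ m := fun i => by
        rw [hm, mvps_maximalIdeal]; exact Ideal.subset_span ⟨i, rfl⟩
      have hqN : (q : MvPowerSeries (Fin d) k) ∈ m ^ N := by
        have := Ideal.sub_mem _ ha (Ideal.pow_le_pow_right (Nat.le_succ N) hq')
        simpa using this
      have h2 : (q : MvPowerSeries (Fin d) k) *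
          (∑ i, (β i - MvPowerSeries.C (MvPowerSeries.constantCoeff (β i))) * MvPowerSeries.X i) ∈
            m ^ (N + 1 + 1) := by
        rw [pow_succ, pow_succ, mul_assoc]
        refine Ideal.mul_mem_mul hqN (Ideal.sum_mem _ fun i _ => ?_)
        exact Ideal.mul_mem_mul (hconst _) (hXm i)
      have h3 := Ideal.add_mem _ h1 h2
      convert h3 using 1
      rw [MvPolynomial.coe_mul]
      have : ((∑ i, MvPolynomial.C (MvPowerSeries.constantCoeff (β i)) * MvPolynomial.X i :
          MvPolynomial (Fin d) k) : MvPowerSeries (Fin d) k) =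
          ∑ i, MvPowerSeries.C (MvPowerSeries.constantCoeff (β i)) * MvPowerSeries.X i := by
        have h := map_sum (MvPolynomial.coeToMvPowerSeries.ringHom (σ := Fin d) (R := k))
          (fun i => MvPolynomial.C (MvPowerSeries.constantCoeff (β i)) * MvPolynomial.X i)
          Finset.univ
        refine h.trans (Finset.sum_congr rfl fun i _ => ?_)
        simp
      rw [this]
      simp only [sub_mul, Finset.sum_sub_distrib]
      ring
    · rintro a b ⟨q, hq, hq'⟩ ⟨r, hr, hr'⟩
      refine ⟨q + r, hq.add hr, ?_⟩
      have := Ideal.add_mem _ hq' hr'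
      rw [MvPolynomial.coe_add]
      convert this using 1
      ring

theorem exists_int_dehomog (k : Type*) [Field k] [CharZero k] (d N : ℕ)
    (q : MvPolynomial (Fin (d + 1)) k) (hq : q.IsHomogeneous N) (hq0 : q ≠ 0) :
    ∃ c : Fin d → ℤ, MvPolynomial.eval (Fin.cons 1 (fun i => (c i : k))) q ≠ 0 := by
  let Q : MvPolynomial (Fin d) k :=
    MvPolynomial.aeval (Fin.cons 1 MvPolynomial.X : Fin (d+1) → MvPolynomial (Fin d) k) q
  have hQ : ∀ c : Fin d → k, MvPolynomial.eval c Q = MvPolynomial.eval (Fin.cons 1 c) q := by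
    intro c
    simp only [Q]
    rw [← MvPolynomial.coe_aeval_eq_eval, ← MvPolynomial.coe_aeval_eq_eval]
    change (MvPolynomial.aeval c) _ = (MvPolynomial.aeval _) q
    have hcomp : (MvPolynomial.aeval c).comp (MvPolynomial.aeval
        (Fin.cons 1 MvPolynomial.X : Fin (d+1) → MvPolynomial (Fin d) k)) =
        (MvPolynomial.aeval (Fin.cons 1 c) : MvPolynomial (Fin (d+1)) k →ₐ[k] k) := by
      ext i
      refine Fin.cases ?_ (fun i => ?_) i <;> simp
    exact congrArg (fun f => f q) hcomp
  have hQ0 : Q ≠ 0 := by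
    intro h
    have h1 : MvPolynomial.X 0 * q = 0 := by
      apply MvPolynomial.funext
      intro a
      rw [map_mul, MvPolynomial.eval_X, map_zero]
      by_cases ha : a 0 = 0
      · rw [ha, zero_mul]
      · have h2 := hQ (fun i => a i.succ / a 0)
        rw [h, map_zero] at h2
        have h4 : MvPolynomial.eval (fun i => a 0 *
            (Fin.cons 1 (fun i => a i.succ / a 0) : Fin (d+1) → k) i) q =
            a 0 ^ N * MvPolynomial.eval (Fin.cons 1 (fun i => a i.succ / a 0)) q := by
          rw [MvPolynomial.eval_eq, MvPolynomial.eval_eq, Finset.mul_sum]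
          refine Finset.sum_congr rfl fun m hm => ?_
          have : ∑ i ∈ m.support, m i = N := by
            have := hq (MvPolynomial.mem_support_iff.1 hm)
            rw [← this]; exact congrFun (congrArg DFunLike.coe Finsupp.degree_eq_weight_one) m
          simp only [mul_pow, Finset.prod_mul_distrib]
          rw [Finset.prod_pow_eq_pow_sum, this]
          ring
        rw [← h2, mul_zero] at h4
        have h5 : (fun i => a 0 * (Fin.cons 1 (fun i => a i.succ / a 0) : Fin (d+1) → k) i) = a := by
          ext i
          refine Fin.cases ?_ (fun i => ?_) i
          · simp
          · simp only [Fin.cons_succ]; field_simp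
        rw [h5] at h4
        rw [h4, mul_zero]
    exact hq0 ((mul_eq_zero.1 h1).resolve_left (MvPolynomial.X_ne_zero 0))
  by_contra! hall
  apply hQ0
  refine MvPolynomial.funext_set (fun _ => Set.range (Int.cast : ℤ → k))
    (fun _ => Set.infinite_range_of_injective Int.cast_injective) fun c hc => ?_
  choose c' hc' using fun i => hc i trivial
  have := hall c'
  rw [map_zero, hQ]
  have hcc : (fun i => (c' i : k)) = c := funext hc'
  rwa [hcc] at this

theorem exists_coord_change (k : Type*) [Field k] [CharZero k] (d : ℕ)
    (G : MvPowerSeries (Fin (d + 1)) k) (hG : G ≠ 0) :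
    ∃ (c : Fin d → ℤ) (L : MvPowerSeries (Fin (d + 1)) k →+* PowerSeries (MvPowerSeries (Fin d) k)),
      L (MvPowerSeries.X 0) = PowerSeries.X ∧
      (∀ i : Fin d, L (MvPowerSeries.X i.succ) =
        PowerSeries.C (MvPowerSeries.X i) + (c i : PowerSeries (MvPowerSeries (Fin d) k)) *
          PowerSeries.X) ∧
      PowerSeries.map (IsLocalRing.residue (MvPowerSeries (Fin d) k)) (L G) ≠ 0 := by
  set m := IsLocalRing.maximalIdeal (MvPowerSeries (Fin (d+1)) k) with hm
  have hcomp := mvps_complete k (d + 1)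
  obtain ⟨N, hN, hN'⟩ : ∃ N, G ∈ m ^ N ∧ G ∉ m ^ (N + 1) := by
    by_contra! hall
    have : ∀ N, G ∈ m ^ N := fun N => by
      induction N with
      | zero => simp
      | succ N ih => exact hall N ih
    apply hG
    refine IsHausdorff.haus (I := m) (M := MvPowerSeries (Fin (d+1)) k) inferInstance _ fun n => ?_
    rw [SModEq.sub_mem, sub_zero]; simpa using this n
  obtain ⟨q, hq, hqG⟩ := mvps_leading_form k (d + 1) N G hN
  have hq0 : q ≠ 0 := by
    rintro rfl
    apply hN'; simpa using hqG
  obtain ⟨c, hc⟩ := exists_int_dehomog k d N q hq hq0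
  let a : Fin (d + 1) → MvPowerSeries (Fin (d + 1)) k :=
    Fin.cons (MvPowerSeries.X 0) fun i => MvPowerSeries.X i.succ +
      (c i : MvPowerSeries (Fin (d + 1)) k) * MvPowerSeries.X 0
  have ha : MvPowerSeries.HasSubst a := by
    apply MvPowerSeries.hasSubst_of_constantCoeff_zero
    intro i
    refine Fin.cases ?_ (fun i => ?_) i <;> simp [a]
  let S := MvPowerSeries.substAlgHom (R := k) ha
  let L : MvPowerSeries (Fin (d + 1)) k →ₐ[k] PowerSeries (MvPowerSeries (Fin d) k) :=
    (MvPowerSeries.finSuccEquiv k d).toAlgHom.comp S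
  have hL0 : L (MvPowerSeries.X 0) = PowerSeries.X := by
    change MvPowerSeries.finSuccEquiv k d (S (MvPowerSeries.X 0)) = _
    rw [MvPowerSeries.substAlgHom_X]
    exact MvPowerSeries.finSuccEquiv_X_zero
  have hLs : ∀ i : Fin d, L (MvPowerSeries.X i.succ) =
        PowerSeries.C (MvPowerSeries.X i) + (c i : PowerSeries (MvPowerSeries (Fin d) k)) *
          PowerSeries.X := by
    intro i
    change MvPowerSeries.finSuccEquiv k d (S (MvPowerSeries.X i.succ)) = _
    rw [MvPowerSeries.substAlgHom_X]
    simp [a, MvPowerSeries.finSuccEquiv_X_zero, MvPowerSeries.finSuccEquiv_X_succ]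
  refine ⟨c, L.toRingHom, hL0, hLs, ?_⟩
  -- the composite
  let ρ : MvPowerSeries (Fin (d + 1)) k →+*
      PowerSeries (IsLocalRing.ResidueField (MvPowerSeries (Fin d) k)) :=
    (PowerSeries.map (IsLocalRing.residue (MvPowerSeries (Fin d) k))).comp L.toRingHom
  let j : k →+* IsLocalRing.ResidueField (MvPowerSeries (Fin d) k) :=
    (IsLocalRing.residue _).comp MvPowerSeries.C
  have hρX : ∀ i, ρ (MvPowerSeries.X i) =
      PowerSeries.C (j ((Fin.cons 1 (fun i => (c i : k)) : Fin (d+1) → k) i)) * PowerSeries.X := by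
    intro i
    refine Fin.cases ?_ (fun i => ?_) i
    · change PowerSeries.map (IsLocalRing.residue (MvPowerSeries (Fin d) k)) (L _) = _
      rw [hL0]; simp
    · change PowerSeries.map (IsLocalRing.residue (MvPowerSeries (Fin d) k)) (L _) = _
      rw [hLs]
      have : IsLocalRing.residue (MvPowerSeries (Fin d) k) (MvPowerSeries.X i) = 0 := by
        rw [IsLocalRing.residue_eq_zero_iff, mvps_maximalIdeal]
        exact Ideal.subset_span ⟨i, rfl⟩
      simp [this]
  have hρC : ∀ b : k, ρ (MvPowerSeries.C b) = PowerSeries.C (j b) := by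
    intro b
    have h1 : L (MvPowerSeries.C b) = PowerSeries.C (MvPowerSeries.C b) := by
      change MvPowerSeries.finSuccEquiv k d (S (algebraMap k _ b)) = _
      rw [AlgHom.commutes]
      exact MvPowerSeries.finSuccEquiv_C b
    change PowerSeries.map (IsLocalRing.residue (MvPowerSeries (Fin d) k)) (L _) = _
    rw [h1, PowerSeries.map_C]
    rfl
  have hρq : ρ (q : MvPowerSeries (Fin (d+1)) k) =
      PowerSeries.C (j (MvPolynomial.eval (Fin.cons 1 (fun i => (c i : k))) q)) *
        PowerSeries.X ^ N := by
    have h1 : ρ (q : MvPowerSeries (Fin (d+1)) k) =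
        MvPolynomial.eval₂ (PowerSeries.C.comp j) (fun i => ρ (MvPowerSeries.X i)) q := by
      have : (ρ.comp (MvPolynomial.coeToMvPowerSeries.ringHom (σ := Fin (d+1)) (R := k))) =
          MvPolynomial.eval₂Hom (PowerSeries.C.comp j) (fun i => ρ (MvPowerSeries.X i)) := by
        apply MvPolynomial.ringHom_ext
        · intro r; simp [hρC]
        · intro i; simp
      exact congrArg (fun f => f q) this
    rw [h1, MvPolynomial.eval₂_eq, MvPolynomial.eval_eq, map_sum, map_sum, Finset.sum_mul]
    refine Finset.sum_congr rfl fun e he => ?_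
    have : ∑ i ∈ e.support, e i = N := by
      have := hq (MvPolynomial.mem_support_iff.1 he)
      rw [← this]; exact congrFun (congrArg DFunLike.coe Finsupp.degree_eq_weight_one) e
    simp only [hρX, mul_pow, Finset.prod_mul_distrib]
    rw [Finset.prod_pow_eq_pow_sum, this]
    simp only [RingHom.comp_apply, map_mul, map_prod, map_pow]
    ring
  have hρm : ∀ b ∈ m ^ (N + 1), PowerSeries.X ^ (N + 1) ∣ ρ b := by
    intro b hb
    have h1 := Ideal.mem_map_of_mem ρ hb
    rw [Ideal.map_pow] at h1
    have h2 : m.map ρ ≤ Ideal.span {PowerSeries.X} := by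
      rw [hm, mvps_maximalIdeal, Ideal.map_span, Ideal.span_le]
      rintro _ ⟨_, ⟨i, rfl⟩, rfl⟩
      rw [hρX]
      exact Ideal.mul_mem_left _ _ (Ideal.mem_span_singleton_self _)
    have h3 := Ideal.pow_right_mono h2 (N+1) h1
    rwa [Ideal.span_singleton_pow, Ideal.mem_span_singleton] at h3
  intro h0
  have h0' : ρ G = 0 := h0
  have h1 := hρm _ hqG
  rw [map_sub, h0', zero_sub, dvd_neg, hρq] at h1
  have h2 := PowerSeries.X_pow_dvd_iff.1 h1 N (Nat.lt_succ_self N)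
  rw [PowerSeries.coeff_C_mul, PowerSeries.coeff_X_pow, if_pos rfl, mul_one] at h2
  exact hc ((map_eq_zero_iff j j.injective).1 h2)


/-- evaluation of an integer polynomial (with a fixed choice of `ℤ`-algebra structure). -/
noncomputable def evz {B : Type*} [CommRing B] {σ : Type*} (z : σ → B) (g : MvPolynomial σ ℤ) : B :=
  MvPolynomial.aeval z g

theorem map_evz {B C : Type*} [CommRing B] [CommRing C] (h : B →+* C) {σ : Type*}
    (z : σ → B) (g : MvPolynomial σ ℤ) :
    h (evz z g) = evz (fun i => h (z i)) g := map_aeval_int h z g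

theorem lift_back {A : Type*} [CommRing A] [IsDomain A] [IsLocalRing A]
    [IsAdicComplete (IsLocalRing.maximalIdeal A) A] {σ κ : Type*}
    (F : Polynomial (MvPolynomial σ ℤ)) (g : MvPolynomial σ ℤ)
    (p : κ → Polynomial (MvPolynomial σ ℤ)) (z : σ → A) (θ c ϖ : A) (w : κ → A)
    (hϖ : ϖ ∈ IsLocalRing.maximalIdeal A)
    (hF : (ϖ * MvPolynomial.aeval z g) ^ 3 ∣ evp z θ F)
    (hF' : (ϖ * MvPolynomial.aeval z g) ^ 3 ∣ MvPolynomial.aeval z g - c * evp z θ F.derivative)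
    (hw : ∀ j, (ϖ * MvPolynomial.aeval z g) ^ 3 ∣ MvPolynomial.aeval z g * w j - evp z θ (p j)) :
    ∃ (θ' : A) (b : κ → A), evp z θ' F = 0 ∧
      (∀ j, MvPolynomial.aeval z g * b j = evp z θ' (p j)) ∧ ∀ j, ϖ ^ 2 ∣ b j - w j := by
  set γ : A := MvPolynomial.aeval z g with hγ
  set δ := evp z θ F.derivative with hδ
  obtain ⟨r, hr⟩ := hF'
  obtain ⟨r', hr'⟩ := hF
  have hu : IsUnit (1 - ϖ ^ 3 * γ ^ 2 * r) := by
    have : ϖ ^ 3 * γ ^ 2 * r ∈ IsLocalRing.maximalIdeal A := by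
      have := Ideal.mul_mem_right (ϖ ^ 2 * γ ^ 2 * r) _ hϖ
      convert this using 1; ring
    by_contra h
    have h' : 1 - ϖ ^ 3 * γ ^ 2 * r ∈ IsLocalRing.maximalIdeal A := h
    have := Ideal.add_mem _ h' this
    rw [sub_add_cancel] at this
    exact (Ideal.ne_top_iff_one _).1 (IsLocalRing.maximalIdeal.isMaximal A).ne_top this
  obtain ⟨v, hv⟩ := hu.exists_left_inv
  have hγδ : γ = δ * (v * c) := by
    have h1 : c * δ = γ * (1 - ϖ ^ 3 * γ ^ 2 * r) := by linear_combination -hr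
    linear_combination (-γ) * hv - v * h1
  set e := v * c
  obtain ⟨θ', e', h1, h2⟩ := hensel_division (IsLocalRing.maximalIdeal A)
    (F.map (MvPolynomial.aeval z : MvPolynomial σ ℤ →ₐ[ℤ] A).toRingHom) θ
    (e ^ 2 * ϖ ^ 3 * γ * r') (by
      have := Ideal.mul_mem_right (ϖ ^ 2 * e ^ 2 * γ * r') _ hϖ
      convert this using 1; ring) (by
      rw [Polynomial.derivative_map, ← evp_eq_eval_map, ← evp_eq_eval_map, ← hδ, hr']
      linear_combination (ϖ ^ 3 * γ * r') * (γ + δ * e) * hγδ)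
  rw [← evp_eq_eval_map] at h1
  rw [Polynomial.derivative_map, ← evp_eq_eval_map, ← hδ] at h2
  have h3 : ∀ j, ∃ y, evp z θ' (p j) = evp z θ (p j) + ϖ ^ 3 * γ * y := by
    intro j
    obtain ⟨y, hy⟩ := Polynomial.sub_dvd_eval_sub θ' θ
      ((p j).map (MvPolynomial.aeval z : MvPolynomial σ ℤ →ₐ[ℤ] A).toRingHom)
    rw [← evp_eq_eval_map, ← evp_eq_eval_map] at hy
    refine ⟨δ * e ^ 2 * r' * e' * y, ?_⟩
    linear_combination hy + y * h2
  choose y hy using h3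
  choose q hq using hw
  refine ⟨θ', fun j => w j + ϖ ^ 3 * (y j - γ ^ 2 * q j), h1, fun j => ?_, fun j => ?_⟩
  · linear_combination hq j - hy j
  · exact ⟨ϖ * (y j - γ ^ 2 * q j), by ring⟩

/-- The polynomial data appearing in the inductive step of the transfer theorem. -/
def StepData {A : Type*} [CommRing A] {d : ℕ} (x : Fin d → A) {σ κ : Type*}
    (F : Polynomial (MvPolynomial σ ℤ)) (g : MvPolynomial σ ℤ)
    (p : κ → Polynomial (MvPolynomial σ ℤ)) (kap : Fin (d + 1) → κ) : Prop :=
  ∃ (P U : Polynomial A) (z : σ → Polynomial A) (θ c V V' : Polynomial A)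
    (w V1 : κ → Polynomial A) (V2 : Fin (d + 1) → Polynomial A) (i0 : Polynomial A),
    P.Monic ∧ Polynomial.X * evz z g = P * U ∧
    (i0 * U).coeff 0 = 1 ∧
    evp z θ F = P ^ 3 * V ∧
    evz z g - c * evp z θ F.derivative = P ^ 3 * V' ∧
    (∀ j, evz z g * w j - evp z θ (p j) = P ^ 3 * V1 j) ∧
    w (kap 0) - Polynomial.X = P ^ 3 * V2 0 ∧
    ∀ i : Fin d, w (kap i.succ) - Polynomial.C (x i) = P ^ 3 * V2 i.succ

theorem StepData.map {A B : Type*} [CommRing A] [CommRing B] (h : A →+* B) {d : ℕ} {x : Fin d → A}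
    {σ κ : Type*} {F : Polynomial (MvPolynomial σ ℤ)} {g : MvPolynomial σ ℤ}
    {p : κ → Polynomial (MvPolynomial σ ℤ)} {kap : Fin (d + 1) → κ}
    (H : StepData x F g p kap) : StepData (fun i => h (x i)) F g p kap := by
  obtain ⟨P, U, z, θ, c, V, V', w, V1, V2, i0, h1, h2, h3, h4, h5, h6, h7, h8⟩ := H
  let m := Polynomial.mapRingHom h
  refine ⟨m P, m U, fun i => m (z i), m θ, m c, m V, m V', fun j => m (w j), fun j => m (V1 j),
    fun i => m (V2 i), m i0, h1.map h, ?_, ?_, ?_, ?_, fun j => ?_, ?_, fun i => ?_⟩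
  · have := congrArg m h2
    rw [map_mul, map_mul, map_evz] at this
    simpa [m] using this
  · rw [← map_mul]; simp only [m, Polynomial.coe_mapRingHom, Polynomial.coeff_map, h3, map_one]
  · rw [← map_evp, h4, map_mul, map_pow]
  · rw [← map_evp, ← map_evz, ← map_mul, ← map_sub, h5, map_mul, map_pow]
  · rw [← map_evp, ← map_evz, ← map_mul, ← map_sub, h6, map_mul, map_pow]
  · have := congrArg m h7
    rw [map_sub, map_mul, map_pow] at this
    simpa [m] using this
  · have := congrArg m (h8 i)
    rw [map_sub, map_mul, map_pow] at this
    simpa [m] using this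

theorem StepData.of_injective {A B : Type*} [CommRing A] [CommRing B] (h : A →+* B)
    (hinj : Function.Injective h) {d : ℕ} {x : Fin d → A}
    {σ κ : Type*} {F : Polynomial (MvPolynomial σ ℤ)} {g : MvPolynomial σ ℤ}
    {p : κ → Polynomial (MvPolynomial σ ℤ)} {kap : Fin (d + 1) → κ}
    (P U : Polynomial A) (z : σ → Polynomial A) (θ c V V' : Polynomial A)
    (w V1 : κ → Polynomial A) (V2 : Fin (d + 1) → Polynomial A) (i0 : Polynomial A)
    (h1 : (P.map h).Monic)
    (h2 : Polynomial.X * evz (fun i => (z i).map h) g = P.map h * U.map h)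
    (h3 : (i0.map h * U.map h).coeff 0 = 1)
    (h4 : evp (fun i => (z i).map h) (θ.map h) F = P.map h ^ 3 * V.map h)
    (h5 : evz (fun i => (z i).map h) g -
      c.map h * evp (fun i => (z i).map h) (θ.map h) F.derivative = P.map h ^ 3 * V'.map h)
    (h6 : ∀ j, evz (fun i => (z i).map h) g * (w j).map h -
      evp (fun i => (z i).map h) (θ.map h) (p j) = P.map h ^ 3 * (V1 j).map h)
    (h7 : (w (kap 0)).map h - Polynomial.X = P.map h ^ 3 * (V2 0).map h)
    (h8 : ∀ i : Fin d, (w (kap i.succ)).map h - Polynomial.C (h (x i)) =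
      P.map h ^ 3 * (V2 i.succ).map h) :
    StepData x F g p kap := by
  let m := Polynomial.mapRingHom h
  have hm : ∀ q : Polynomial A, q.map h = m q := fun q => rfl
  have hminj : Function.Injective m := Polynomial.map_injective h hinj
  have e1 : evz (fun i => (z i).map h) g =
    m (evz z g) := (map_evz m z g).symm
  have e2 : ∀ q, (evp (fun i => (z i).map h) (θ.map h) q : Polynomial B) =
    m (evp z θ q) := fun q => (map_evp m z θ q).symm
  have e3 : (Polynomial.X : Polynomial B) = m Polynomial.X := by simp [m]
  have e4 : ∀ a : A, (Polynomial.C (h a) : Polynomial B) = m (Polynomial.C a) := by simp [m]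
  rw [e1] at h2 h5
  simp only [e1] at h6
  simp only [e2] at h4 h5 h6
  rw [e3] at h2 h7
  simp only [e4] at h8
  simp only [hm, ← map_mul, ← map_pow, ← map_sub] at h2 h3 h4 h5 h6 h7 h8
  refine ⟨P, U, z, θ, c, V, V', w, V1, V2, i0, Polynomial.monic_of_injective hinj h1, hminj h2, ?_,
    hminj h4, hminj h5, fun j => hminj (h6 j), hminj h7, fun i => hminj (h8 i)⟩
  apply hinj
  rw [map_one, ← h3]
  simp [m]


theorem exists_fg_subalgebra_lifts {A : Type u} [CommRing A] (Q : Set (Polynomial A))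
    (hQ : Q.Finite) :
    ∃ S : Subalgebra ℤ A, Algebra.FiniteType ℤ S ∧
      ∀ q ∈ Q, ∃ r : Polynomial S, r.map (S.val : S →+* A) = q := by
  classical
  let T : Set A := ⋃ q ∈ Q, (q.coeffs : Set A)
  have hT : T.Finite := hQ.biUnion fun q _ => Finset.finite_toSet _
  refine ⟨Algebra.adjoin ℤ T, ?_, ?_⟩
  · rw [← Subalgebra.fg_iff_finiteType]
    exact ⟨hT.toFinset, by simp⟩
  · intro q hq
    have : q ∈ Polynomial.lifts (((Algebra.adjoin ℤ T).val : _ →ₐ[ℤ] A) : Algebra.adjoin ℤ T →+* A) := by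
      rw [Polynomial.lifts_iff_coeff_lifts]
      intro n
      by_cases h0 : q.coeff n = 0
      · exact ⟨0, by simp [h0]⟩
      · refine ⟨⟨q.coeff n, Algebra.subset_adjoin ?_⟩, rfl⟩
        exact Set.mem_biUnion hq (Polynomial.coeff_mem_coeffs h0)
    exact (Polynomial.mem_lifts q).1 this

theorem StepData.descend {A : Type u} [CommRing A] {d : ℕ} {x : Fin d → A}
    {σ κ : Type*} [Finite σ] [Finite κ] {F : Polynomial (MvPolynomial σ ℤ)} {g : MvPolynomial σ ℤ}
    {p : κ → Polynomial (MvPolynomial σ ℤ)} {kap : Fin (d + 1) → κ}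
    (H : StepData x F g p kap) :
    ∃ S : Subalgebra ℤ A, Algebra.FiniteType ℤ S ∧ ∃ x' : Fin d → S, (∀ i, (x' i : A) = x i) ∧
      StepData x' F g p kap := by
  obtain ⟨P, U, z, θ, c, V, V', w, V1, V2, i0, h1, h2, h3, h4, h5, h6, h7, h8⟩ := H
  let Q : Set (Polynomial A) := {P, U, θ, c, V, V', i0} ∪ Set.range z ∪ Set.range w ∪
    Set.range V1 ∪ Set.range V2 ∪ Set.range (fun i => Polynomial.C (x i))
  have hQ : Q.Finite := by
    refine Set.Finite.union (Set.Finite.union (Set.Finite.union (Set.Finite.union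
      (Set.Finite.union ?_ ?_) ?_) ?_) ?_) ?_
    · exact Set.toFinite _
    all_goals exact Set.finite_range _
  obtain ⟨S, hS, hlift⟩ := exists_fg_subalgebra_lifts Q hQ
  let h : S →+* A := S.val
  obtain ⟨P', rfl⟩ := hlift P (by simp [Q])
  obtain ⟨U', rfl⟩ := hlift U (by simp [Q])
  obtain ⟨θ', rfl⟩ := hlift θ (by simp [Q])
  obtain ⟨c', rfl⟩ := hlift c (by simp [Q])
  obtain ⟨V0', rfl⟩ := hlift V (by simp [Q])
  obtain ⟨V'', rfl⟩ := hlift V' (by simp [Q])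
  obtain ⟨i0', rfl⟩ := hlift i0 (by simp [Q])
  choose z' hz' using fun i => hlift (z i) (by simp [Q])
  choose w' hw' using fun i => hlift (w i) (by simp [Q])
  choose V1' hV1' using fun i => hlift (V1 i) (by simp [Q])
  choose V2' hV2' using fun i => hlift (V2 i) (by simp [Q])
  choose y hy using fun i => hlift (Polynomial.C (x i)) (by simp [Q])
  obtain rfl : (fun i => (z' i).map (S.val : S →+* A)) = z := funext hz'
  obtain rfl : (fun i => (w' i).map (S.val : S →+* A)) = w := funext hw'
  obtain rfl : (fun i => (V1' i).map (S.val : S →+* A)) = V1 := funext hV1'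
  obtain rfl : (fun i => (V2' i).map (S.val : S →+* A)) = V2 := funext hV2'
  have hx : ∀ i, (((y i).coeff 0 : S) : A) = x i := fun i => by
    have := congrArg (fun q => Polynomial.coeff q 0) (hy i)
    simpa using this
  refine ⟨S, hS, fun i => (y i).coeff 0, hx, ?_⟩
  refine StepData.of_injective (S.val : S →+* A) Subtype.val_injective P' U' z' θ' c' V0' V'' w' V1'
    V2' i0' h1 h2 h3 h4 h5 h6 h7 fun i => ?_
  have := h8 i
  rw [← hx] at this
  exact this

/-- existence of the step data in characteristic zero -/
theorem stepData_of_hom {A : Type*} [CommRing A] [IsDomain A] [IsLocalRing A]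
    [IsAdicComplete (IsLocalRing.maximalIdeal A) A] {d : ℕ} (x : Fin d → A) {σ κ : Type*}
    {S : Type*} [CommRing S] (L : S →+* PowerSeries A)
    (F : Polynomial (MvPolynomial σ ℤ)) (g : MvPolynomial σ ℤ)
    (p : κ → Polynomial (MvPolynomial σ ℤ)) (kap : Fin (d + 1) → κ)
    (z : σ → S) (θ c : S) (w : κ → S)
    (h1 : evp z θ F = 0) (h2 : c * evp z θ F.derivative = evz z g)
    (h3 : ∀ j, evz z g * w j = evp z θ (p j))
    (h4 : L (w (kap 0)) = PowerSeries.X) (h5 : ∀ i : Fin d, L (w (kap i.succ)) = PowerSeries.C (x i))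
    (h6 : PowerSeries.map (IsLocalRing.residue A) (PowerSeries.X * L (evz z g)) ≠ 0) :
    StepData x F g p kap := by
  set G := PowerSeries.X * L (evz z g) with hG
  obtain ⟨P, U, hPU⟩ := PowerSeries.exists_isWeierstrassFactorization h6
  have hP := hPU.isDistinguishedAt
  have hUu := hPU.isUnit
  have hGe := hPU.eq_mul
  have hP3 : (P ^ 3).IsDistinguishedAt (IsLocalRing.maximalIdeal A) := by
    rw [pow_succ, pow_succ, pow_one]; exact (hP.mul hP).mul hP
  let ι : Polynomial A →+* PowerSeries A := Polynomial.coeToPowerSeries.ringHom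
  have hι : ∀ q : Polynomial A, (q : PowerSeries A) = ι q := fun q => rfl
  have hιinj : Function.Injective ι := Polynomial.coe_injective A
  let I := Ideal.span {ι (P ^ 3)}
  let π : PowerSeries A →+* PowerSeries A ⧸ I := Ideal.Quotient.mk I
  have hr : ∀ a : S, ∃ r : Polynomial A, π (ι r) = π (L a) := by
    intro a
    obtain ⟨r, q, hrq⟩ := weierstrass_poly (P ^ 3) hP3 (L a)
    refine ⟨r, ?_⟩
    rw [Eq.comm, Ideal.Quotient.mk_eq_mk_iff_sub_mem, Ideal.mem_span_singleton', hrq]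
    exact ⟨q, by rw [hι, hι]; ring⟩
  choose r hr using hr
  have hdvd : ∀ q : Polynomial A, π (ι q) = 0 → ∃ V, q = P ^ 3 * V := by
    intro q hq
    rw [Ideal.Quotient.eq_zero_iff_mem, Ideal.mem_span_singleton] at hq
    exact weierstrass_dvd (P ^ 3) hP3 q hq
  let π1 : Polynomial A →+* PowerSeries A ⧸ I := π.comp ι
  let π2 : S →+* PowerSeries A ⧸ I := π.comp L
  have hπ : ∀ a, π1 (r a) = π2 a := hr
  have e1 : π1 (evz (fun i => r (z i)) g) = π2 (evz z g) := by
    rw [map_evz, map_evz]; simp only [hπ]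
  have e2 : ∀ H, π1 (evp (fun i => r (z i)) (r θ) H) = π2 (evp z θ H) := by
    intro H
    rw [map_evp, map_evp]; simp only [hπ]
  -- P divides X * g(z0)
  have hX : ∃ U0, Polynomial.X * evz (fun i => r (z i)) g = P * U0 ∧ IsUnit (U0.coeff 0) := by
    have k1 : ι (evz (fun i => r (z i)) g) - L (evz z g) ∈ I := by
      rw [← Ideal.Quotient.mk_eq_mk_iff_sub_mem]; exact e1
    obtain ⟨q, hq⟩ := Ideal.mem_span_singleton'.1 k1
    have k2 : ι (Polynomial.X * evz (fun i => r (z i)) g) =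
        ι P * (U + ι P ^ 2 * (PowerSeries.X * q)) := by
      have hιX : ι Polynomial.X = PowerSeries.X := Polynomial.coe_X
      rw [map_pow] at hq
      rw [hι] at hGe
      rw [map_mul, hιX]
      linear_combination hGe - PowerSeries.X * hq + (-1 : PowerSeries A) * hG
    obtain ⟨U0, hU0⟩ := weierstrass_dvd P hP (Polynomial.X * evz (fun i => r (z i)) g)
      (by rw [hι, hι]; exact ⟨_, k2⟩)
    refine ⟨U0, hU0, ?_⟩
    rw [hU0, map_mul] at k2
    have hP0 : ι P ≠ 0 := by
      rw [Ne, map_eq_zero_iff _ hιinj]; exact hP.monic.ne_zero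
    have k3 := mul_left_cancel₀ hP0 k2
    have k4 : U0.coeff 0 = PowerSeries.constantCoeff (ι U0) := by
      rw [← PowerSeries.coeff_zero_eq_constantCoeff_apply]; exact (Polynomial.coeff_coe _ _).symm
    rw [k4, k3, map_add, map_mul, map_mul, PowerSeries.constantCoeff_X, zero_mul, mul_zero, add_zero]
    exact hUu.map _
  obtain ⟨U0, hU0, hU0u⟩ := hX
  obtain ⟨i0, hi0⟩ := hU0u.exists_left_inv
  obtain ⟨V, hV⟩ := hdvd (evp (fun i => r (z i)) (r θ) F) (by
    have := e2 F; rw [h1, map_zero] at this; exact this)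
  obtain ⟨V', hV'⟩ := hdvd (evz (fun i => r (z i)) g -
    r c * evp (fun i => r (z i)) (r θ) F.derivative) (by
    change π1 _ = 0
    rw [map_sub, map_mul, e1, e2, hπ, ← map_mul, h2, sub_self])
  have hV1 := fun j => hdvd (evz (fun i => r (z i)) g * r (w j) -
    evp (fun i => r (z i)) (r θ) (p j)) (by
    change π1 _ = 0
    rw [map_sub, map_mul, e1, e2, hπ, ← map_mul, h3, sub_self])
  choose V1 hV1 using hV1
  obtain ⟨V20, hV20⟩ := hdvd (r (w (kap 0)) - Polynomial.X) (by
    change π1 _ = 0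
    rw [map_sub, hπ]
    change π (L _) - π (ι _) = 0
    rw [h4, show ι Polynomial.X = PowerSeries.X from Polynomial.coe_X, sub_self])
  have hV2 := fun i : Fin d => hdvd (r (w (kap i.succ)) - Polynomial.C (x i)) (by
    change π1 _ = 0
    rw [map_sub, hπ]
    change π (L _) - π (ι _) = 0
    rw [h5, show ι (Polynomial.C (x i)) = PowerSeries.C (x i) from Polynomial.coe_C _, sub_self])
  choose V2 hV2 using hV2
  refine ⟨P, U0, fun i => r (z i), r θ, r c, V, V', fun j => r (w j), V1, Fin.cons V20 V2,
    Polynomial.C i0, hP.monic, hU0, ?_, hV, hV', hV1, hV20, hV2⟩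
  rw [Polynomial.coeff_C_mul, hi0]


theorem stepData_lift {k : Type u} [Field k] {d : ℕ} (x : Fin d → MvPowerSeries (Fin d) k)
    (hx : Ideal.span (Set.range x) = IsLocalRing.maximalIdeal _)
    {σ κ : Type*} {F : Polynomial (MvPolynomial σ ℤ)} {g : MvPolynomial σ ℤ}
    {p : κ → Polynomial (MvPolynomial σ ℤ)} {kap : Fin (d + 1) → κ}
    (H : StepData x F g p kap) :
    ∃ (z : σ → MvPowerSeries (Fin (d + 1)) k) (θ : MvPowerSeries (Fin (d + 1)) k)
      (b : κ → MvPowerSeries (Fin (d + 1)) k),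
      evp z θ F = 0 ∧ evz z g ≠ 0 ∧ (∀ j, evz z g * b j = evp z θ (p j)) ∧
      Ideal.span (Set.range fun i => b (kap i)) = IsLocalRing.maximalIdeal _ := by
  obtain ⟨P, U, z, θ, c, V, V', w, V1, V2, i0, h1, h2, h3, h4, h5, h6, h7, h8⟩ := H
  set m := IsLocalRing.maximalIdeal (MvPowerSeries (Fin (d + 1)) k) with hm
  have hdom : IsDomain (MvPowerSeries (Fin (d + 1)) k) := NoZeroDivisors.to_isDomain _
  have hcomp := mvps_complete k (d + 1)
  let e := MvPowerSeries.finSuccEquiv k d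
  let ι : Polynomial (MvPowerSeries (Fin d) k) →+* MvPowerSeries (Fin (d + 1)) k :=
    (e.symm.toRingEquiv.toRingHom).comp Polynomial.coeToPowerSeries.ringHom
  have hιinj : Function.Injective ι := e.symm.injective.comp (Polynomial.coe_injective _)
  have hιX : ι Polynomial.X = MvPowerSeries.X 0 := by
    change e.symm ((Polynomial.X : Polynomial (MvPowerSeries (Fin d) k)) : PowerSeries _) = _
    rw [Polynomial.coe_X, AlgEquiv.symm_apply_eq]
    exact (MvPowerSeries.finSuccEquiv_X_zero).symm
  have hιC : ∀ i, ι (Polynomial.C (MvPowerSeries.X i)) = MvPowerSeries.X i.succ := by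
    intro i
    change e.symm ((Polynomial.C _ : Polynomial (MvPowerSeries (Fin d) k)) : PowerSeries _) = _
    rw [Polynomial.coe_C, AlgEquiv.symm_apply_eq]
    exact (MvPowerSeries.finSuccEquiv_X_succ i).symm
  have hXm : (MvPowerSeries.X 0 : MvPowerSeries (Fin (d + 1)) k) ∈ m := by
    rw [hm, mvps_maximalIdeal]; exact Ideal.subset_span ⟨0, rfl⟩
  have hUu : IsUnit (ι U) := by
    have : IsUnit ((U : Polynomial (MvPowerSeries (Fin d) k)) : PowerSeries (MvPowerSeries (Fin d) k)) := by
      rw [PowerSeries.isUnit_iff_constantCoeff, ← PowerSeries.coeff_zero_eq_constantCoeff_apply,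
        Polynomial.coeff_coe]
      rw [Polynomial.mul_coeff_zero] at h3
      exact IsUnit.of_mul_eq_one_right _ h3
    exact this.map e.symm.toRingEquiv.toRingHom
  have hγ : MvPowerSeries.X 0 * evz (fun i => ι (z i)) g = ι P * ι U := by
    rw [← hιX, ← map_evz, ← map_mul, h2, map_mul]
  set γ := evz (fun i => ι (z i)) g with hγdef
  have hP0 : ι P ≠ 0 := by rw [Ne, map_eq_zero_iff _ hιinj]; exact h1.ne_zero
  have hγ0 : γ ≠ 0 := by
    intro h
    rw [h, mul_zero] at hγ
    exact mul_ne_zero hP0 hUu.ne_zero hγ.symm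
  have hdvd : ∀ q, (MvPowerSeries.X 0 * γ) ^ 3 ∣ ι (P ^ 3 * q) := by
    intro q
    rw [hγ, mul_pow, map_mul, map_pow]
    exact mul_dvd_mul_left _ ((hUu.pow 3).dvd)
  obtain ⟨θ', b, k1, k2, k3⟩ := lift_back F g p (fun i => ι (z i)) (ι θ) (ι c) (MvPowerSeries.X 0)
    (fun j => ι (w j)) hXm
    (by rw [← map_evp, h4]; exact hdvd _)
    (by
      change _ ∣ γ - _
      rw [hγdef, ← map_evp, ← map_evz, ← map_mul, ← map_sub, h5]; exact hdvd _)
    (fun j => by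
      change _ ∣ γ * _ - _
      rw [hγdef, ← map_evp, ← map_evz, ← map_mul, ← map_sub, h6]; exact hdvd _)
  refine ⟨fun i => ι (z i), θ', b, k1, hγ0, k2, ?_⟩
  have hPm : ι P ∈ m := by
    have : ι P * ι U ∈ m := by rw [← hγ]; exact Ideal.mul_mem_right _ _ hXm
    exact (Ideal.unit_mul_mem_iff_mem m hUu).1 (by rwa [mul_comm])
  -- the targets
  let τ : Fin (d + 1) → MvPowerSeries (Fin (d + 1)) k :=
    Fin.cons (MvPowerSeries.X 0) fun i => ι (Polynomial.C (x i))
  have hτ : ∀ i, b (kap i) - τ i ∈ m ^ 2 := by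
    intro i
    have j1 : b (kap i) - ι (w (kap i)) ∈ m ^ 2 := by
      obtain ⟨y, hy⟩ := k3 (kap i)
      rw [hy]
      exact Ideal.mul_mem_right _ _ (Ideal.pow_mem_pow hXm 2)
    have j2 : ι (w (kap i)) - τ i ∈ m ^ 2 := by
      have j3 : ι (w (kap i)) - τ i = ι (P ^ 3 * V2 i) := by
        refine Fin.cases ?_ (fun i => ?_) i
        · rw [← h7, map_sub, hιX]; rfl
        · rw [← h8, map_sub]; rfl
      rw [j3, map_mul, map_pow]
      exact Ideal.mul_mem_right _ _ (Ideal.pow_le_pow_right (by norm_num) (Ideal.pow_mem_pow hPm 3))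
    have := Ideal.add_mem _ j1 j2
    rwa [sub_add_sub_cancel] at this
  have hspan : m ≤ Ideal.span (Set.range τ) := by
    rw [hm, mvps_maximalIdeal, Ideal.span_le]
    rintro _ ⟨i, rfl⟩
    refine Fin.cases ?_ (fun i => ?_) i
    · exact Ideal.subset_span ⟨0, rfl⟩
    · rw [← hιC]
      have h : (MvPowerSeries.X i : MvPowerSeries (Fin d) k) ∈ Ideal.span (Set.range x) := by
        rw [hx, mvps_maximalIdeal]; exact Ideal.subset_span ⟨i, rfl⟩
      have h' := Ideal.mem_map_of_mem (ι.comp Polynomial.C) h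
      rw [Ideal.map_span] at h'
      refine Ideal.span_mono ?_ h'
      rintro _ ⟨_, ⟨i, rfl⟩, rfl⟩
      exact ⟨i.succ, rfl⟩
  have hτm : ∀ i, τ i ∈ m := by
    intro i
    refine Fin.cases hXm (fun i => ?_) i
    have h : x i ∈ IsLocalRing.maximalIdeal (MvPowerSeries (Fin d) k) := by
      rw [← hx]; exact Ideal.subset_span ⟨i, rfl⟩
    rw [mvps_maximalIdeal] at h
    have h' := Ideal.mem_map_of_mem (ι.comp Polynomial.C) h
    rw [Ideal.map_span] at h'
    rw [hm, mvps_maximalIdeal]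
    refine Ideal.span_mono ?_ h'
    rintro _ ⟨_, ⟨i, rfl⟩, rfl⟩
    exact ⟨i.succ, (hιC i).symm⟩
  apply le_antisymm
  · rw [Ideal.span_le]
    rintro _ ⟨i, rfl⟩
    have := Ideal.add_mem _ (Ideal.pow_le_self two_ne_zero (hτ i)) (hτm i)
    rwa [sub_add_cancel] at this
  · have hfg : m.FG := IsNoetherian.noetherian m
    refine Submodule.le_of_le_smul_of_le_jacobson_bot (I := m) hfg
      (IsLocalRing.maximalIdeal_le_jacobson _) ?_
    refine hspan.trans ?_
    rw [Ideal.span_le]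
    rintro _ ⟨i, rfl⟩
    have j1 : b (kap i) ∈ Ideal.span (Set.range fun i => b (kap i)) := Ideal.subset_span ⟨i, rfl⟩
    have j2 := hτ i
    rw [pow_two] at j2
    have := Submodule.sub_mem_sup j1 j2
    rwa [sub_sub_cancel] at this

/-- The transfer statement in `d` variables. -/
def Transfer (d : ℕ) : Prop :=
  ∀ (K : Type u) [Field K] [CharZero K] (S : Type u) [CommRing S], Algebra.FiniteType ℤ S →
    ∀ (φ : S →+* MvPowerSeries (Fin d) K) (s : Fin d → S) (f : S),
      (∀ i, φ (s i) = MvPowerSeries.X i) → φ f ≠ 0 →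
      ∃ (p : ℕ) (_ : p.Prime) (k : Type u) (_ : Field k) (_ : CharP k p)
        (ψ : S →+* MvPowerSeries (Fin d) k),
        Ideal.span (Set.range fun i => ψ (s i)) = IsLocalRing.maximalIdeal _ ∧ ψ f ≠ 0

theorem isJacobsonRing_int : IsJacobsonRing ℤ := by
  rw [isJacobsonRing_iff_prime_eq]
  intro P hP
  by_cases h : P = ⊥
  · subst h
    rw [eq_bot_iff]
    intro x hx
    rw [Ideal.mem_jacobson_bot] at hx
    have h1 := Int.isUnit_iff.1 (hx (3 * x))
    rcases h1 with h1 | h1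
    · have : x * x = 0 := by linarith
      simpa using this
    · nlinarith [mul_self_nonneg x]
  · have := hP.isMaximal h
    exact Ideal.jacobson_eq_self_of_isMaximal

theorem char_prime_of_surjective {T L : Type*} [CommRing T] [Algebra ℤ T] [Field L] (hT : Algebra.FiniteType ℤ T)
    (π : T →+* L) (hπ : Function.Surjective π) (p : ℕ) [CharP L p] : p.Prime := by
  have hft : Algebra.FiniteType ℤ L := Algebra.FiniteType.of_surjective
    ({ π with commutes' := fun n => by simp } : T →ₐ[ℤ] L) hπ
  have hjac := isJacobsonRing_int
  have hfin := finite_of_finite_type_of_isJacobsonRing ℤ L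
  refine (CharP.char_is_prime_or_zero L p).resolve_right ?_
  rintro rfl
  have : CharZero L := CharP.charP_to_charZero _
  have hintg : Algebra.IsIntegral ℤ L := Algebra.IsIntegral.of_finite ℤ L
  exact Int.not_isField (isField_of_isIntegral_of_isField (R := ℤ) (S := L)
    (by
      have : algebraMap ℤ L = Int.castRingHom L := RingHom.ext_int _ _
      rw [this]; exact Int.cast_injective) (Field.toIsField _))

theorem transfer_zero : Transfer.{u} 0 := by
  intro K _ _ S _ hS φ s f hs hf
  let T := Localization.Away f
  have hTft : Algebra.FiniteType ℤ T := by
    have : Algebra.FiniteType S T := IsLocalization.finiteType_of_monoid_fg (Submonoid.powers f) T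
    exact Algebra.FiniteType.trans hS this
  have hnt : Nontrivial T := by
    by_contra h
    rw [not_nontrivial_iff_subsingleton, IsLocalization.subsingleton_iff (M := Submonoid.powers f)]
      at h
    obtain ⟨n, hn⟩ := h
    have := congrArg φ hn
    simp only [map_pow, map_zero] at this
    exact pow_ne_zero n hf this
  obtain ⟨M, hM⟩ := Ideal.exists_maximal T
  let _ : Field (T ⧸ M) := Ideal.Quotient.field M
  obtain ⟨p, hp⟩ := CharP.exists (T ⧸ M)
  have hpp : p.Prime :=
    char_prime_of_surjective hTft (Ideal.Quotient.mk M) Ideal.Quotient.mk_surjective p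
  refine ⟨p, hpp, T ⧸ M, inferInstance, hp,
    MvPowerSeries.C.comp ((Ideal.Quotient.mk M).comp (algebraMap S T)), ?_, ?_⟩
  · rw [mvps_maximalIdeal]
    congr 1
    ext y
    constructor <;> rintro ⟨i, -⟩ <;> exact i.elim0
  · have h1 : IsUnit (algebraMap S T f) := IsLocalization.Away.algebraMap_isUnit f
    exact (h1.map (MvPowerSeries.C.comp (Ideal.Quotient.mk M))).ne_zero


theorem StepData.descend_hom {A : Type u} [CommRing A] {d : ℕ} {x : Fin d → A}
    {σ κ : Type*} [Finite σ] [Finite κ] {F : Polynomial (MvPolynomial σ ℤ)} {g : MvPolynomial σ ℤ}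
    {p : κ → Polynomial (MvPolynomial σ ℤ)} {kap : Fin (d + 1) → κ}
    (H : StepData x F g p kap) :
    ∃ (S : Type u) (_ : CommRing S) (j : S →+* A), Algebra.FiniteType ℤ S ∧
      ∃ x' : Fin d → S, (∀ i, j (x' i) = x i) ∧ StepData x' F g p kap := by
  obtain ⟨S, h1, x', h2, h3⟩ := H.descend
  exact ⟨S, inferInstance, S.val.toRingHom, h1, x', h2, h3⟩

theorem transfer_succ_core {d : ℕ} (hd : Transfer.{u} d) (K : Type u) [Field K] [CharZero K]
    (S : Type u) [CommRing S] [IsDomain S] [CharZero S] (hS : Algebra.FiniteType ℤ S)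
    (φ : S →+* MvPowerSeries (Fin (d + 1)) K) (hφ : Function.Injective φ)
    (s : Fin (d + 1) → S) (f : S)
    (hs : ∀ i, φ (s i) = MvPowerSeries.X i) (hf : f ≠ 0) :
    ∃ (p : ℕ) (_ : p.Prime) (k : Type u) (_ : Field k) (_ : CharP k p)
        (ψ : S →+* MvPowerSeries (Fin (d + 1)) k),
        Ideal.span (Set.range fun i => ψ (s i)) = IsLocalRing.maximalIdeal _ ∧ ψ f ≠ 0 := by
  classical
  obtain ⟨gens, hgens⟩ := hS.out
  let w : gens ⊕ Fin (d + 1) → S := Sum.elim (fun y => y.1) s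
  have hw : Algebra.adjoin ℤ (Set.range w) = ⊤ := by
    rw [eq_top_iff, ← hgens]
    apply Algebra.adjoin_mono
    intro y hy
    exact ⟨Sum.inl ⟨y, hy⟩, rfl⟩
  obtain ⟨σ, hσ, z, θ, F, g, p, c0, c', h1, h2, h3, h4, h5, h6⟩ := structure_lemma S f hf w hw
  have hdomK : IsDomain (MvPowerSeries (Fin (d + 1)) K) := NoZeroDivisors.to_isDomain _
  have hdomK' : IsDomain (MvPowerSeries (Fin d) K) := NoZeroDivisors.to_isDomain _
  have hcomp := mvps_complete K d
  have hX0 : (MvPowerSeries.X 0 : MvPowerSeries (Fin (d + 1)) K) ≠ 0 := by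
    intro h
    have := congrArg (MvPowerSeries.coeff (Finsupp.single (0 : Fin (d + 1)) 1)) h
    simp at this
  obtain ⟨c, L, hL0, hLs, hLG⟩ := exists_coord_change K d (MvPowerSeries.X 0 * φ (evz z g))
    (mul_ne_zero hX0 (by rw [Ne, map_eq_zero_iff _ hφ]; exact h3))
  let s' : Fin (d + 1) → S := Fin.cons (s 0) (fun i => s i.succ - (c i : S) * s 0)
  let pp : Fin (d + 1) → Polynomial (MvPolynomial σ ℤ) :=
    Fin.cons (p (Sum.inr 0)) fun i => p (Sum.inr i.succ) - (c i : Polynomial _) * p (Sum.inr 0)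
  let p' : (gens ⊕ Fin (d + 1)) ⊕ Fin (d + 1) → Polynomial (MvPolynomial σ ℤ) := Sum.elim p pp
  let w' : (gens ⊕ Fin (d + 1)) ⊕ Fin (d + 1) → S := Sum.elim w s'
  have step : StepData (fun i => (MvPowerSeries.X i : MvPowerSeries (Fin d) K)) F g p' Sum.inr := by
    refine stepData_of_hom _ (L.comp φ) F g p' Sum.inr z θ c0 w' h1 h2 ?_ ?_ ?_ ?_
    · rintro (j | j)
      · exact h5 j
      · refine Fin.cases ?_ (fun i => ?_) j
        · exact h5 (Sum.inr 0)
        · change evz z g * (s i.succ - (c i : S) * s 0) =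
            evp z θ (p (Sum.inr i.succ) - (c i : Polynomial _) * p (Sum.inr 0))
          have e1 : evz z g * s i.succ = _ := h5 (Sum.inr i.succ)
          have e2 : evz z g * s 0 = _ := h5 (Sum.inr 0)
          rw [map_sub, map_mul, map_intCast, ← e1, ← e2]; ring
    · change L (φ (s 0)) = _
      rw [hs, hL0]
    · intro i
      change L (φ (s i.succ - (c i : S) * s 0)) = _
      rw [map_sub, map_mul, hs, hs, map_sub, hLs, map_mul, hL0, map_intCast, map_intCast]
      ring
    · rw [map_mul, hL0] at hLG
      exact hLG
  obtain ⟨S', _, jS, hS', x', hx', step'⟩ := step.descend_hom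
  obtain ⟨q, hq, k, _, _, ψ, hψ, -⟩ := hd K S' hS' jS x' 1 hx'
    (by rw [map_one]; exact one_ne_zero)
  have hdomk : IsDomain (MvPowerSeries (Fin (d + 1)) k) := NoZeroDivisors.to_isDomain _
  obtain ⟨z', θ', b, k1, k2, k3, k4⟩ := stepData_lift _ hψ (step'.map ψ)
  obtain ⟨Ψ, hΨ, hΨz⟩ := h6 (MvPowerSeries (Fin (d + 1)) k) z' θ' (fun j => b (Sum.inl j)) k1 k2
    (fun j => k3 (Sum.inl j))
  refine ⟨q, hq, k, inferInstance, inferInstance, Ψ, ?_, ?_⟩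
  · have e0 : b (Sum.inr 0) = Ψ (s 0) := by
      apply mul_left_cancel₀ k2
      rw [k3, show Ψ (s 0) = b (Sum.inl (Sum.inr 0)) from hΨ (Sum.inr 0), k3]
      rfl
    have ei : ∀ i : Fin d, b (Sum.inr i.succ) = Ψ (s i.succ) - (c i : MvPowerSeries _ k) * Ψ (s 0) := by
      intro i
      apply mul_left_cancel₀ k2
      have e1 := k3 (Sum.inl (Sum.inr i.succ))
      have e2 := k3 (Sum.inl (Sum.inr 0))
      have e3 := k3 (Sum.inr i.succ)
      rw [← hΨ] at e1 e2
      have e4 : evp z' θ' (p' (Sum.inr i.succ)) = evp z' θ' (p' (Sum.inl (Sum.inr i.succ))) -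
          (c i : MvPowerSeries _ k) * evp z' θ' (p' (Sum.inl (Sum.inr 0))) := by
        change evp z' θ' (p (Sum.inr i.succ) - (c i : Polynomial _) * p (Sum.inr 0)) = _
        rw [map_sub, map_mul, map_intCast]; rfl
      rw [e3, e4, ← e1, ← e2]
      change evz z' g * Ψ (s i.succ) - _ * (evz z' g * Ψ (s 0)) = _
      ring
    rw [← k4]
    apply le_antisymm <;> rw [Ideal.span_le] <;> rintro _ ⟨i, rfl⟩ <;>
      refine Fin.cases ?_ (fun i => ?_) i
    · exact Ideal.subset_span ⟨0, e0⟩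
    · have : Ψ (s i.succ) = b (Sum.inr i.succ) + (c i : MvPowerSeries _ k) * b (Sum.inr 0) := by
        rw [ei, e0]; ring
      change Ψ (s i.succ) ∈ _
      rw [this]
      exact Ideal.add_mem _ (Ideal.subset_span ⟨_, rfl⟩)
        (Ideal.mul_mem_left _ _ (Ideal.subset_span ⟨_, rfl⟩))
    · exact Ideal.subset_span ⟨0, e0.symm⟩
    · change b (Sum.inr i.succ) ∈ _
      rw [ei]
      exact Ideal.sub_mem _ (Ideal.subset_span ⟨_, rfl⟩)
        (Ideal.mul_mem_left _ _ (Ideal.subset_span ⟨0, rfl⟩))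
  · intro h0
    apply k2
    have e1 := map_evz Ψ z g
    have e2 : evz (fun i => Ψ (z i)) g = evz z' g := by
      congr 1; funext i; exact hΨz i
    rw [← e2, ← e1]
    change Ψ (MvPolynomial.aeval z g) = 0
    rw [← h4, map_mul, h0, mul_zero]

theorem transfer_all (d : ℕ) : Transfer.{u} d := by
  induction d with
  | zero => exact transfer_zero
  | succ d ih =>
    intro K _ _ S _ hS φ s f hs hf
    have hdomK : IsDomain (MvPowerSeries (Fin (d + 1)) K) := NoZeroDivisors.to_isDomain _
    let S1 := φ.range
    have hc : CharZero S1 := by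
      have : Function.Injective (algebraMap ℚ K) := (algebraMap ℚ K).injective
      have h0 : CharZero (MvPowerSeries (Fin (d + 1)) K) :=
        charZero_of_injective_algebraMap (R := K) (MvPowerSeries.C_injective)
      refine ⟨fun a b h => ?_⟩
      have := congrArg (Subtype.val) h
      exact_mod_cast this
    have hft : Algebra.FiniteType ℤ S1 :=
      Algebra.FiniteType.of_surjective φ.rangeRestrict.toIntAlgHom φ.rangeRestrict_surjective
    obtain ⟨p, hp, k, i1, i2, ψ, h1, h2⟩ := transfer_succ_core ih K S1 hft φ.range.subtype
      Subtype.val_injective (fun i => φ.rangeRestrict (s i)) (φ.rangeRestrict f) hs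
      (fun h => hf (congrArg Subtype.val h))
    exact ⟨p, hp, k, i1, i2, ψ.comp φ.rangeRestrict, h1, h2⟩


theorem ringKrullDim_le_of_integral_injective {R S : Type*} [CommRing R] [CommRing S] [Algebra R S]
    [Algebra.IsIntegral R S] (hinj : Function.Injective (algebraMap R S)) :
    ringKrullDim R ≤ ringKrullDim S := by
  refine iSup_le fun l => ?_
  obtain ⟨P, -, hP, hPc⟩ := Ideal.exists_ideal_over_prime_of_isIntegral (S := S)
    l.head.asIdeal ⊥ (by
      rw [← RingHom.ker_eq_comap_bot, (RingHom.injective_iff_ker_eq_bot _).1 hinj]; exact bot_le)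
  have : P.LiesOver (RelSeries.head l).asIdeal := ⟨hPc.symm⟩
  obtain ⟨L, hL, -⟩ := Ideal.exists_ltSeries_of_hasGoingUp l P
  rw [← hL]
  exact Order.le_krullDim_iff.2 ⟨L, rfl⟩

theorem ringKrullDim_le_of_integral {R S : Type*} [CommRing R] [CommRing S] [Algebra R S]
    [Algebra.IsIntegral R S] : ringKrullDim S ≤ ringKrullDim R := by
  refine Order.krullDim_le_of_strictMono (PrimeSpectrum.comap (algebraMap R S)) ?_
  intro P Q h
  have := P.isPrime
  exact Ideal.IsIntegral.comap_lt_comap (R := R) (I := P.asIdeal) (J := Q.asIdeal) h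

theorem mvps_dim_ge (k : Type*) [Field k] (d : ℕ) :
    (d : WithBot ℕ∞) ≤ ringKrullDim (MvPowerSeries (Fin d) k) := by
  induction d with
  | zero =>
    have : Nontrivial (MvPowerSeries (Fin 0) k) := inferInstance
    exact_mod_cast ringKrullDim_nonneg_of_nontrivial
  | succ d ih =>
    rw [ringKrullDim_eq_of_ringEquiv (MvPowerSeries.finSuccEquiv k d).toRingEquiv]
    refine le_trans ?_ ringKrullDim_succ_le_ringKrullDim_powerseries
    push_cast
    gcongr

theorem chain_bound_finite_mvps {k : Type u} [Field k] (p : ℕ) (hp : p.Prime) [CharP k p] {d : ℕ}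
    {T : Type u} [CommRing T] [Algebra (MvPowerSeries (Fin d) k) T]
    [Module.Finite (MvPowerSeries (Fin d) k) T]
    (hinj : Function.Injective (algebraMap (MvPowerSeries (Fin d) k) T))
    (s : Fin d → MvPowerSeries (Fin d) k)
    (hs : Ideal.span (Set.range s) = IsLocalRing.maximalIdeal (MvPowerSeries (Fin d) k))
    (t : Fin d → ℕ) (ht : ∀ i, 0 < t i) (n h : ℕ)
    (H : HasChain T (fun i => algebraMap _ T (s i)) t n h) : n * ∏ i, t i ≤ h := by
  let A := MvPowerSeries (Fin d) k
  have hAn : IsNoetherianRing A := MvPowerSeries.isNoetherianRing k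
  have hTn : IsNoetherianRing T := IsNoetherianRing.of_finite A T
  have hintg : Algebra.IsIntegral A T := Algebra.IsIntegral.of_finite A T
  have hdim : (d : WithBot ℕ∞) ≤ ringKrullDim T :=
    (mvps_dim_ge k d).trans (ringKrullDim_le_of_integral_injective hinj)
  obtain ⟨M, hM, hMd⟩ : ∃ M : Ideal T, M.IsMaximal ∧ ((d : ℕ∞)) ≤ M.height := by
    by_contra hcon
    push Not at hcon
    rcases Nat.eq_zero_or_pos d with h0 | h0
    · have : Nontrivial T := hinj.nontrivial
      obtain ⟨M, hM⟩ := Ideal.exists_maximal T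
      have := hcon M hM
      rw [h0] at this
      simp at this
    · have : ringKrullDim T ≤ ((d - 1 : ℕ) : WithBot ℕ∞) := by
        rw [ringKrullDim_le_iff_isMaximal_height_le]
        intro M hM
        have := hcon M hM
        have h2 : M.height ≤ ((d - 1 : ℕ) : ℕ∞) := by
          refine Order.le_of_lt_add_one ?_
          have : ((d - 1 : ℕ) : ℕ∞) + 1 = d := by
            exact_mod_cast Nat.sub_add_cancel h0
          rwa [this]
        exact WithBot.coe_le_coe.2 h2
      have := hdim.trans this
      have : d ≤ d - 1 := by exact_mod_cast this
      omega
  let L := Localization.AtPrime M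
  have hLn : IsNoetherianRing L := IsLocalization.isNoetherianRing M.primeCompl L inferInstance
  have hMc : M.comap (algebraMap A T) = IsLocalRing.maximalIdeal A := by
    have := Ideal.isMaximal_comap_of_isIntegral_of_isMaximal (R := A) M
    exact IsLocalRing.eq_maximalIdeal this
  have hML : (IsLocalRing.maximalIdeal L).comap (algebraMap T L) = M :=
    IsLocalization.AtPrime.under_maximalIdeal L M
  have hsM : ∀ i, algebraMap T L (algebraMap A T (s i)) ∈ IsLocalRing.maximalIdeal L := by
    intro i
    rw [← Ideal.mem_comap, hML, ← Ideal.mem_comap, hMc, ← hs]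
    exact Ideal.subset_span ⟨i, rfl⟩
  have hcharL : CharP L p := by
    let f : k →+* L := ((algebraMap T L).comp (algebraMap A T)).comp (MvPowerSeries.C)
    exact charP_of_injective_ringHom f.injective p
  refine chain_bound_local_charP (R := L) p hp ?_ (fun i => algebraMap T L (algebraMap A T (s i)))
    ?_ ?_ t ht n h (H.map (algebraMap T L))
  · rw [IsLocalization.AtPrime.ringKrullDim_eq_height M L]
    exact_mod_cast hMd
  · exact hsM
  · apply le_antisymm
    · rw [(IsLocalRing.maximalIdeal.isMaximal L).isPrime.radical_le_iff, Ideal.span_le]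
      rintro _ ⟨i, rfl⟩
      exact hsM i
    · rw [Ideal.radical_eq_sInf]
      refine le_sInf ?_
      rintro P ⟨hPle, hPp⟩
      have e1 : (P.comap (algebraMap T L)).comap (algebraMap A T) = IsLocalRing.maximalIdeal A := by
        apply (IsLocalRing.maximalIdeal.isMaximal A).eq_of_le _ _ |>.symm
        · exact Ideal.IsPrime.ne_top'
        · rw [← hs, Ideal.span_le]
          rintro _ ⟨i, rfl⟩
          exact hPle (Ideal.subset_span ⟨i, rfl⟩)
      have e2 : (P.comap (algebraMap T L)).IsMaximal := by
        apply Ideal.isMaximal_of_isIntegral_of_isMaximal_comap (R := A)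
        rw [e1]; exact IsLocalRing.maximalIdeal.isMaximal A
      have e3 : P.comap (algebraMap T L) ≤ M := by
        exact (Ideal.comap_mono (IsLocalRing.le_maximalIdeal hPp.ne_top)).trans_eq hML
      have e4 := e2.eq_of_le hM.ne_top e3
      have e5 := IsLocalization.map_comap M.primeCompl L (IsLocalRing.maximalIdeal L)
      refine e5.ge.trans ?_
      rw [Ideal.map_le_iff_le_comap]
      exact (hML.trans e4.symm).le

open TensorProduct in
theorem chain_bound_transfer {k : Type u} [Field k] (p : ℕ) (hp : p.Prime) [CharP k p] {d : ℕ}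
    {S T : Type u} [CommRing S] [CommRing T] [Algebra S T] [Module.Finite S T]
    (Ψ : T →ₗ[S] S) (ψ : S →+* MvPowerSeries (Fin d) k) (hψ : ψ (Ψ 1) ≠ 0)
    (s : Fin d → S)
    (hs : Ideal.span (Set.range fun i => ψ (s i)) =
      IsLocalRing.maximalIdeal (MvPowerSeries (Fin d) k))
    (t : Fin d → ℕ) (ht : ∀ i, 0 < t i) (n h : ℕ)
    (H : HasChain T (fun i => algebraMap S T (s i)) t n h) : n * ∏ i, t i ≤ h := by
  let A := MvPowerSeries (Fin d) k
  have hdom : IsDomain A := NoZeroDivisors.to_isDomain _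
  let _ : Algebra S A := ψ.toAlgebra
  let e : A ⊗[S] T →ₗ[A] A :=
    (TensorProduct.AlgebraTensorModule.rid S A A).toLinearMap ∘ₗ Ψ.baseChange A
  have he : ∀ a : A, e (a ⊗ₜ 1) = ψ (Ψ 1) * a := by
    intro a
    change (TensorProduct.AlgebraTensorModule.rid S A A) (a ⊗ₜ Ψ 1) = _
    rw [TensorProduct.AlgebraTensorModule.rid_tmul]
    exact Algebra.smul_def _ _
  have hinj : Function.Injective (algebraMap A (A ⊗[S] T)) := by
    rw [injective_iff_map_eq_zero]
    intro a ha
    have h1 : (a ⊗ₜ[S] (1 : T)) = 0 := ha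
    have h2 := he a
    rw [h1, map_zero] at h2
    exact (mul_eq_zero.1 h2.symm).resolve_left hψ
  refine chain_bound_finite_mvps (T := A ⊗[S] T) p hp hinj (fun i => ψ (s i)) hs t ht n h ?_
  have := H.map (Algebra.TensorProduct.includeRight : T →ₐ[S] A ⊗[S] T).toRingHom
  convert this using 2 with i
  change algebraMap A (A ⊗[S] T) (algebraMap S A (s i)) = (Algebra.TensorProduct.includeRight : T →ₐ[S] A ⊗[S] T) (algebraMap S T (s i))
  rw [AlgHom.commutes]
  exact (IsScalarTower.algebraMap_apply S A (A ⊗[S] T) (s i)).symm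


theorem HasChain.exists_finite_descent {R : Type*} [CommRing R] {d : ℕ} {x : Fin d → R}
    {t : Fin d → ℕ} {n h : ℕ} (H : HasChain R x t n h) :
    ∃ Q : Set R, Q.Finite ∧ ∀ (T : Type u) [CommRing T] (f : T →+* R) (_ : Function.Injective f)
      (y : Fin d → T) (_ : ∀ i, f (y i) = x i), Q ⊆ Set.range f → HasChain T y t n h := by
  obtain ⟨u, a, c, b, v, h1, h2, h3⟩ := H
  refine ⟨Set.range (fun i : _ × _ => u i.1 i.2) ∪ Set.range (fun i : _ × _ × _ => a i.1 i.2.1 i.2.2)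
    ∪ Set.range (fun i : _ × _ × _ × _ => c i.1 i.2.1 i.2.2.1 i.2.2.2)
    ∪ Set.range (fun i : _ × _ => b i.1 i.2) ∪ Set.range (fun i : _ × _ × _ => v i.1 i.2.1 i.2.2),
    Set.toFinite _, ?_⟩
  intro T _ f hf y hy hQ
  have q1 : ∀ i j, ∃ z, f z = u i j := fun i j =>
    hQ (Or.inl (Or.inl (Or.inl (Or.inl ⟨(i, j), rfl⟩))))
  have q2 : ∀ i j k, ∃ z, f z = a i j k := fun i j k =>
    hQ (Or.inl (Or.inl (Or.inl (Or.inr ⟨(i, j, k), rfl⟩))))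
  have q3 : ∀ i j k l, ∃ z, f z = c i j k l := fun i j k l =>
    hQ (Or.inl (Or.inl (Or.inr ⟨(i, j, k, l), rfl⟩)))
  have q4 : ∀ i j, ∃ z, f z = b i j := fun i j => hQ (Or.inl (Or.inr ⟨(i, j), rfl⟩))
  have q5 : ∀ i j k, ∃ z, f z = v i j k := fun i j k => hQ (Or.inr ⟨(i, j, k), rfl⟩)
  choose u' hu using q1
  choose a' ha using q2
  choose c' hc using q3
  choose b' hb using q4
  choose v' hv using q5
  refine ⟨u', a', c', b', v', fun i j k hik => hf ?_, fun i j r => hf ?_, fun r r' => hf ?_⟩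
  · rw [ha, h1 i j k hik, map_zero]
  · simp only [map_mul, map_add, map_sum, map_pow, hy, hu, ha, hc]
    exact h2 i j r
  · simp only [map_mul, map_add, map_sum, map_pow, hy, hu, hb, hv]
    rw [← h3]
    split_ifs <;> simp

theorem exists_descent {A R : Type u} [CommRing A] [CommRing R] [Algebra A R] [Module.Finite A R]
    (Φ : R →ₗ[A] A) {d : ℕ} (x : Fin d → A) {t : Fin d → ℕ} {n h : ℕ}
    (H : HasChain R (fun i => algebraMap A R (x i)) t n h) :
    ∃ (S : Type u) (_ : CommRing S) (j : S →+* A) (_ : Algebra.FiniteType ℤ S) (s : Fin d → S)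
      (T : Type u) (_ : CommRing T) (_ : Algebra S T) (_ : Module.Finite S T) (Ψ : T →ₗ[S] S),
      (∀ i, j (s i) = x i) ∧ j (Ψ 1) = Φ 1 ∧ HasChain T (fun i => algebraMap S T (s i)) t n h := by
  classical
  obtain ⟨m, e, he⟩ := Module.Finite.exists_fin (R := A) (M := R)
  have hco : ∀ r : R, ∃ c : Fin m → A, ∑ i, c i • e i = r := by
    intro r
    rw [← Submodule.mem_span_range_iff_exists_fun, he]; trivial
  choose co hco using hco
  obtain ⟨Q, hQ, hchain⟩ := H.exists_finite_descent
  let Q' : Set R := {1} ∪ Set.range (fun i : Fin m × Fin m => e i.1 * e i.2) ∪ Q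
  have hQ' : Q'.Finite := (Set.toFinite _).union hQ
  let W : Set A := Set.range x ∪ Set.range (fun i => Φ (e i)) ∪ ⋃ q ∈ Q', Set.range (co q)
  have hW : W.Finite := (Set.toFinite _).union (hQ'.biUnion fun q _ => Set.toFinite _)
  let S := Algebra.adjoin ℤ W
  have hft : Algebra.FiniteType ℤ S := by
    rw [← Subalgebra.fg_iff_finiteType]
    exact ⟨hW.toFinset, by simp [S]⟩
  have hWS : ∀ w ∈ W, w ∈ S := fun w hw => Algebra.subset_adjoin hw
  let N : Submodule S R := Submodule.span S (Set.range e)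
  have hN : ∀ q ∈ Q', q ∈ N := by
    intro q hq
    rw [← hco q]
    refine Submodule.sum_mem _ fun i _ => ?_
    have : co q i ∈ S := hWS _ (Or.inr (Set.mem_biUnion hq ⟨i, rfl⟩))
    exact N.smul_mem (⟨co q i, this⟩ : S) (Submodule.subset_span ⟨i, rfl⟩)
  have hmul : N * N ≤ N := by
    rw [Submodule.span_mul_span, Submodule.span_le]
    rintro _ ⟨_, ⟨i, rfl⟩, _, ⟨j, rfl⟩, rfl⟩
    exact hN _ (Or.inl (Or.inr ⟨(i, j), rfl⟩))
  let T : Subalgebra S R := N.toSubalgebra (hN 1 (Or.inl (Or.inl rfl)))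
    (fun a b ha hb => hmul (Submodule.mul_mem_mul ha hb))
  have hTfin : Module.Finite S T := by
    have : Module.Finite S N := Module.Finite.span_of_finite S (Set.finite_range e)
    exact this
  have hΦ : ∀ r ∈ N, Φ r ∈ S := by
    intro r hr
    induction hr using Submodule.span_induction with
    | mem y hy => obtain ⟨i, rfl⟩ := hy; exact hWS _ (Or.inl (Or.inr ⟨i, rfl⟩))
    | zero => rw [map_zero]; exact S.zero_mem
    | add a b _ _ ha hb => rw [map_add]; exact S.add_mem ha hb
    | smul a b _ hb =>
      have : a • b = (a : A) • b := rfl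
      rw [this, map_smul]; exact S.mul_mem a.2 hb
  let Ψ : T →ₗ[S] S :=
    { toFun := fun r => ⟨Φ r.1, hΦ r.1 r.2⟩
      map_add' := fun a b => Subtype.ext (map_add Φ a.1 b.1)
      map_smul' := fun a b => Subtype.ext (map_smul Φ (a : A) b.1) }
  refine ⟨S, inferInstance, S.val.toRingHom, hft, fun i => ⟨x i, hWS _ (Or.inl (Or.inl ⟨i, rfl⟩))⟩,
    T, inferInstance, inferInstance, hTfin, Ψ, fun i => rfl, rfl, ?_⟩
  refine hchain T T.val.toRingHom Subtype.val_injective _ (fun i => rfl) ?_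
  intro q hq
  exact ⟨⟨q, hN q (Or.inr hq)⟩, rfl⟩

theorem exists_dual_ne {L V : Type*} [Field L] [AddCommGroup V] [Module L V] {v : V} (hv : v ≠ 0) :
    ∃ ℓ : Module.Dual L V, ℓ v ≠ 0 := by
  by_contra hcon
  push Not at hcon
  exact hv ((Module.forall_dual_apply_eq_zero_iff L _).1 hcon)

open TensorProduct in
theorem exists_linear_form {A R : Type*} [CommRing A] [IsDomain A] [CommRing R] [Algebra A R]
    [Module.Finite A R] (hinj : Function.Injective (algebraMap A R)) :
    ∃ Φ : R →ₗ[A] A, Φ 1 ≠ 0 := by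
  classical
  let L := FractionRing A
  let V := L ⊗[A] R
  have hv : (1 : L) ⊗ₜ[A] (1 : R) ≠ 0 := by
    have h1 := Module.Flat.lTensor_preserves_injective_linearMap (M := L) (Algebra.linearMap A R) hinj
    intro h0
    have h2 : (Algebra.linearMap A R).lTensor L ((1 : L) ⊗ₜ[A] (1 : A)) = 0 := by
      rw [LinearMap.lTensor_tmul, Algebra.linearMap_apply, map_one]; exact h0
    have h3 := (map_eq_zero_iff _ h1).1 h2
    have h4 := congrArg (TensorProduct.rid A L) h3
    simp at h4
  obtain ⟨ℓ, hℓ⟩ : ∃ ℓ : Module.Dual L V, ℓ ((1 : L) ⊗ₜ[A] (1 : R)) ≠ 0 := by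
    exact exists_dual_ne hv
  let ℓ' : R →ₗ[A] L := (ℓ.restrictScalars A) ∘ₗ (TensorProduct.mk A L R 1)
  have hℓ' : ℓ' 1 ≠ 0 := hℓ
  obtain ⟨m, e, he⟩ := Module.Finite.exists_fin (R := A) (M := R)
  obtain ⟨D, hD⟩ := IsLocalization.exist_integer_multiples_of_finite (nonZeroDivisors A)
    (fun i => ℓ' (e i))
  let ℓ2 : R →ₗ[A] L := (D : A) • ℓ'
  have hr : ∀ r, ℓ2 r ∈ LinearMap.range (Algebra.linearMap A L) := by
    intro r
    have hr : r ∈ Submodule.span A (Set.range e) := by rw [he]; trivial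
    induction hr using Submodule.span_induction with
    | mem y hy => obtain ⟨i, rfl⟩ := hy; exact hD i
    | zero => rw [map_zero]; exact Submodule.zero_mem _
    | add a b _ _ ha hb => rw [map_add]; exact Submodule.add_mem _ ha hb
    | smul a b _ hb => rw [map_smul]; exact Submodule.smul_mem _ _ hb
  have hLinj : Function.Injective (Algebra.linearMap A L) := IsFractionRing.injective A L
  let Φ : R →ₗ[A] A := (LinearEquiv.ofInjective (Algebra.linearMap A L) hLinj).symm.toLinearMap ∘ₗ
    ℓ2.codRestrict _ hr
  refine ⟨Φ, fun h => ?_⟩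
  have h1 : ℓ2.codRestrict _ hr 1 = 0 :=
    (LinearEquiv.ofInjective (Algebra.linearMap A L) hLinj).symm.map_eq_zero_iff.1 h
  have h2 : (D : A) • ℓ' 1 = 0 := congrArg Subtype.val h1
  rw [Algebra.smul_def, mul_eq_zero] at h2
  rcases h2 with h2 | h2
  · exact nonZeroDivisors.coe_ne_zero D ((map_eq_zero_iff _ hLinj).1 h2)
  · exact hℓ' h2

theorem chain_bound_finite_char_zero {K : Type u} [Field K] [CharZero K] {d : ℕ}
    {R : Type u} [CommRing R] [Algebra (MvPowerSeries (Fin d) K) R]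
    [Module.Finite (MvPowerSeries (Fin d) K) R]
    (hinj : Function.Injective (algebraMap (MvPowerSeries (Fin d) K) R))
    (t : Fin d → ℕ) (ht : ∀ i, 0 < t i) (n h : ℕ)
    (H : HasChain R (fun i => algebraMap (MvPowerSeries (Fin d) K) R (MvPowerSeries.X i)) t n h) :
    n * ∏ i, t i ≤ h := by
  have hdom : IsDomain (MvPowerSeries (Fin d) K) := NoZeroDivisors.to_isDomain _
  obtain ⟨Φ, hΦ⟩ := exists_linear_form hinj
  obtain ⟨S, _, j, hS, s, T, _, _, _, Ψ, h1, h2, h3⟩ := exists_descent Φ _ H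
  obtain ⟨p, hp, k, _, _, ψ, h4, h5⟩ := transfer_all d K S hS j s (Ψ 1) h1 (by rw [h2]; exact hΦ)
  exact chain_bound_transfer p hp Ψ ψ h5 s h4 t ht n h h3


theorem isPrecomplete_pi {A : Type*} [CommRing A] (I : Ideal A) [IsPrecomplete I A] (k : ℕ) :
    IsPrecomplete I (Fin k → A) := by
  constructor
  intro f hf
  have h1 : ∀ i, ∃ L : A, ∀ n, f n i ≡ L [SMOD (I ^ n • ⊤ : Submodule A A)] := by
    intro i
    refine IsPrecomplete.prec inferInstance (f := fun n => f n i) ?_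
    intro m n hmn
    have := hf hmn
    rw [SModEq.sub_mem] at this ⊢
    have h2 := Submodule.mem_map_of_mem (f := LinearMap.proj (R := A) (φ := fun _ : Fin k => A) i) this
    rw [Submodule.map_smul''] at h2
    exact Submodule.smul_mono le_rfl le_top h2
  choose L hL using h1
  refine ⟨L, fun n => ?_⟩
  rw [SModEq.sub_mem]
  have : f n - L = ∑ i, (f n i - L i) • (Pi.single i 1 : Fin k → A) := by
    ext j
    simp [Finset.sum_apply, Pi.single_apply]
  rw [this]
  refine Submodule.sum_mem _ fun i _ => Submodule.smul_mem_smul ?_ trivial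
  have := hL i n
  rw [SModEq.sub_mem] at this
  simpa using this

/-- Topological Nakayama. -/
theorem finite_of_complete {A : Type*} [CommRing A] (I : Ideal A) [IsPrecomplete I A]
    {N : Type*} [AddCommGroup N] [Module A N] [IsHausdorff I N] (S : Finset N)
    (hS : Submodule.span A (S : Set N) ⊔ I • ⊤ = ⊤) : Module.Finite A N := by
  have := isPrecomplete_pi I S.card
  let e := S.equivFin
  let f : (Fin S.card → A) →ₗ[A] N := Fintype.linearCombination A (fun i => (e.symm i : N))
  have hr : LinearMap.range f = Submodule.span A (S : Set N) := by
    rw [Fintype.range_linearCombination]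
    congr 1
    ext y
    constructor
    · rintro ⟨i, rfl⟩; exact (e.symm i).2
    · intro hy; exact ⟨e ⟨y, hy⟩, by simp⟩
  have hs : Function.Surjective f := by
    apply surjective_of_mkQ_comp_surjective (I := I)
    rw [← LinearMap.range_eq_top, LinearMap.range_comp, hr]
    rw [Submodule.map_mkQ_eq_top, sup_comm]
    exact hS
  exact Module.Finite.of_surjective f hs

theorem exists_span_sup_pow {A S : Type*} [CommRing A] [CommRing S] [Algebra A S] (m : Ideal S)
    (hm : m.FG) (hsurj : Function.Surjective ((Ideal.Quotient.mk m).comp (algebraMap A S))) (n : ℕ) :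
    ∃ T : Finset S, Submodule.span A (T : Set S) ⊔ (m ^ n).restrictScalars A = ⊤ := by
  classical
  induction n with
  | zero => exact ⟨∅, by simp⟩
  | succ n ih =>
    obtain ⟨T, hT⟩ := ih
    obtain ⟨G, hG⟩ := Ideal.FG.pow (n := n) hm
    refine ⟨T ∪ G, ?_⟩
    rw [eq_top_iff, ← hT]
    refine sup_le (le_sup_of_le_left (Submodule.span_mono (by simp))) ?_
    intro y hy
    rw [Submodule.restrictScalars_mem, ← hG] at hy
    induction hy using Submodule.span_induction with
    | mem y hy => exact Submodule.mem_sup_left (Submodule.subset_span (by simp [Finset.mem_coe.1 hy]))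
    | zero => exact zero_mem _
    | add y z _ _ h1 h2 => exact add_mem h1 h2
    | smul a y hy ih =>
      obtain ⟨c, hc⟩ := hsurj (Ideal.Quotient.mk m a)
      have h1 : a - algebraMap A S c ∈ m := by
        rw [← Ideal.Quotient.eq_zero_iff_mem, map_sub, ← hc]; simp
      have h2 : a • y = c • y + (a - algebraMap A S c) * y := by
        rw [smul_eq_mul, Algebra.smul_def]; ring
      rw [h2]
      refine add_mem (Submodule.smul_mem _ _ ih) (Submodule.mem_sup_right ?_)
      rw [Submodule.restrictScalars_mem, pow_succ']
      refine Ideal.mul_mem_mul h1 ?_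
      rw [← hG]; exact hy

theorem exists_mvps_hom {K S : Type*} [Field K] [CommRing S] [Algebra K S] (I : Ideal S)
    [hI : IsAdicComplete I S] {d : ℕ} (x : Fin d → S) (hx : ∀ i, x i ∈ I) :
    ∃ φ : MvPowerSeries (Fin d) K →ₐ[K] S, ∀ i, φ (MvPowerSeries.X i) = x i := by
  let _ : UniformSpace K := ⊥
  have : DiscreteTopology K := ⟨rfl⟩
  have : IsUniformAddGroup K := inferInstance
  let _ : TopologicalSpace S := I.adicTopology
  have hadic : IsAdic I := rfl
  have : IsTopologicalRing S := inferInstance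
  let _ : UniformSpace S := IsTopologicalAddGroup.rightUniformSpace S
  have : IsUniformAddGroup S := isUniformAddGroup_of_addCommGroup
  obtain ⟨_, _⟩ := hadic.isAdicComplete_iff.1 hI
  have : IsLinearTopology S S := I.isLinearTopology
  have : ContinuousSMul K S := by
    constructor
    have : (fun p : K × S => p.1 • p.2) = fun p : K × S => algebraMap K S p.1 * p.2 := by
      ext p; rw [Algebra.smul_def]
    rw [this]
    exact ((continuous_of_discreteTopology (f := algebraMap K S)).comp continuous_fst).mul continuous_snd
  have ha : MvPowerSeries.HasEval x := by
    refine ⟨fun i => ?_, ?_⟩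
    · rw [IsTopologicallyNilpotent, hadic.hasBasis_nhds_zero.tendsto_right_iff]
      intro n _
      filter_upwards [Filter.eventually_ge_atTop n] with k hk
      exact Ideal.pow_le_pow_right hk (Ideal.pow_mem_pow (hx i) k)
    · rw [Filter.cofinite_eq_bot]; exact Filter.tendsto_bot
  refine ⟨MvPowerSeries.aeval ha, fun i => ?_⟩
  have := MvPowerSeries.aeval_coe ha (MvPolynomial.X i : MvPolynomial (Fin d) K)
  simpa using this


theorem formallySmooth_of_charZero (F k : Type*) [Field F] [CharZero F] [Field k] [Algebra F k] :
    Algebra.FormallySmooth F k := by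
  obtain ⟨ι, s, hs⟩ := exists_isTranscendenceBasis' F k
  have h1 := hs.isAlgebraic_field
  have : CharZero (IntermediateField.adjoin F (Set.range s)) := inferInstance
  have h2 : Algebra.IsSeparable (IntermediateField.adjoin F (Set.range s)) k := inferInstance
  exact .of_algebraicIndependent_of_isSeparable hs.1

theorem exists_coeff_field {S : Type u} [CommRing S] [IsLocalRing S]
    [IsAdicComplete (IsLocalRing.maximalIdeal S) S] [Algebra ℚ S] :
    ∃ g : (S ⧸ IsLocalRing.maximalIdeal S) →+* S,
      ∀ a, Ideal.Quotient.mk (IsLocalRing.maximalIdeal S) (g a) = a := by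
  let _ : Field (S ⧸ IsLocalRing.maximalIdeal S) := Ideal.Quotient.field _
  have := formallySmooth_of_charZero ℚ (S ⧸ IsLocalRing.maximalIdeal S)
  obtain ⟨g, hg⟩ := Algebra.FormallySmooth.exists_mkₐ_comp_eq_of_isAdicComplete
    (AlgHom.id ℚ (S ⧸ IsLocalRing.maximalIdeal S))
  exact ⟨g, fun a => DFunLike.congr_fun hg a⟩

theorem mvps_dim_le (k : Type*) [Field k] (d : ℕ) :
    ringKrullDim (MvPowerSeries (Fin d) k) ≤ (d : WithBot ℕ∞) := by
  have : IsNoetherianRing (MvPowerSeries (Fin d) k) := MvPowerSeries.isNoetherianRing k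
  refine (ringKrullDim_le_spanFinrank_maximalIdeal _).trans ?_
  rw [mvps_maximalIdeal]
  have h1 := Submodule.spanFinrank_span_le_ncard_of_finite (R := MvPowerSeries (Fin d) k)
    (Set.finite_range (MvPowerSeries.X : Fin d → MvPowerSeries (Fin d) k))
  have h2 : (Set.range (MvPowerSeries.X : Fin d → MvPowerSeries (Fin d) k)).ncard ≤ d := by
    rw [← Set.image_univ]
    refine (Set.ncard_image_le Set.finite_univ).trans ?_
    simp [Set.ncard_univ]
  exact_mod_cast h1.trans h2

theorem injective_of_dim {A S : Type*} [CommRing A] [IsDomain A] [CommRing S]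
    [Algebra A S] [Module.Finite A S] (d : ℕ) (hA : ringKrullDim A ≤ d) (hS : d ≤ ringKrullDim S) :
    Function.Injective (algebraMap A S) := by
  rw [injective_iff_map_eq_zero]
  intro a ha
  by_contra h0
  have h1 := ringKrullDim_quotient_succ_le_of_nonZeroDivisor (mem_nonZeroDivisors_of_ne_zero h0)
  let f : A ⧸ Ideal.span {a} →+* S := Ideal.Quotient.lift _ (algebraMap A S) (by
    intro b hb
    obtain ⟨c, rfl⟩ := Ideal.mem_span_singleton.1 hb
    rw [map_mul, ha, zero_mul])
  let _ : Algebra (A ⧸ Ideal.span {a}) S := f.toAlgebra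
  have : IsScalarTower A (A ⧸ Ideal.span {a}) S := IsScalarTower.of_algebraMap_eq fun b => rfl
  have : Module.Finite (A ⧸ Ideal.span {a}) S := Module.Finite.of_restrictScalars_finite A _ _
  have h2 := ringKrullDim_le_of_integral (R := A ⧸ Ideal.span {a}) (S := S)
  have h3 : (d : WithBot ℕ∞) + 1 ≤ d :=
    (add_le_add_left (hS.trans h2) 1).trans (h1.trans hA)
  have h4 : d + 1 ≤ d := by exact_mod_cast h3
  omega

theorem isHausdorff_of_map_le {A S : Type*} [CommRing A] [CommRing S] [Algebra A S] (I : Ideal A)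
    (m : Ideal S) [IsHausdorff m S] (h : I.map (algebraMap A S) ≤ m) : IsHausdorff I S := by
  constructor
  intro y hy
  refine IsHausdorff.haus (I := m) inferInstance y fun n => ?_
  have h1 := hy n
  rw [SModEq.zero] at h1 ⊢
  rw [smul_eq_mul, Ideal.mul_top]
  rw [Ideal.smul_top_eq_map, Submodule.restrictScalars_mem, Ideal.map_pow] at h1
  exact Ideal.pow_right_mono h n h1

theorem chain_bound_complete {S : Type u} [CommRing S] [IsLocalRing S]
    [IsAdicComplete (IsLocalRing.maximalIdeal S) S] [Algebra ℚ S]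
    (hfg : (IsLocalRing.maximalIdeal S).FG) {d : ℕ} (hd : (d : WithBot ℕ∞) ≤ ringKrullDim S)
    (x : Fin d → S) (hx : ∀ i, x i ∈ IsLocalRing.maximalIdeal S)
    (N : ℕ) (hN : IsLocalRing.maximalIdeal S ^ N ≤ Ideal.span (Set.range x))
    (t : Fin d → ℕ) (ht : ∀ i, 0 < t i) (n h : ℕ) (H : HasChain S x t n h) :
    n * ∏ i, t i ≤ h := by
  obtain ⟨g, hg⟩ := exists_coeff_field (S := S)
  have hc : CharZero (S ⧸ IsLocalRing.maximalIdeal S) := algebraRat.charZero _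
  generalize hq : Ideal.Quotient.mk (IsLocalRing.maximalIdeal S) = q at hg
  let _ : Field (S ⧸ IsLocalRing.maximalIdeal S) := Ideal.Quotient.field _
  let _ : Algebra (S ⧸ IsLocalRing.maximalIdeal S) S := g.toAlgebra
  obtain ⟨φ, hφ⟩ := exists_mvps_hom (K := S ⧸ IsLocalRing.maximalIdeal S)
    (IsLocalRing.maximalIdeal S) x hx
  let _ : Algebra (MvPowerSeries (Fin d) (S ⧸ IsLocalRing.maximalIdeal S)) S :=
    φ.toRingHom.toAlgebra
  have hmap : ∀ a, algebraMap (MvPowerSeries (Fin d) (S ⧸ IsLocalRing.maximalIdeal S)) S a = φ a :=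
    fun _ => rfl
  have hIx : (Ideal.span (Set.range (MvPowerSeries.X : Fin d →
      MvPowerSeries (Fin d) (S ⧸ IsLocalRing.maximalIdeal S)))).map (algebraMap _ S) =
      Ideal.span (Set.range x) := by
    rw [Ideal.map_span, ← Set.range_comp]
    congr 2
    ext i
    exact hφ i
  have hfin : Module.Finite (MvPowerSeries (Fin d) (S ⧸ IsLocalRing.maximalIdeal S)) S := by
    have hcomp := mvps_complete (S ⧸ IsLocalRing.maximalIdeal S) d
    rw [mvps_maximalIdeal] at hcomp
    have := isHausdorff_of_map_le (S := S) _ (IsLocalRing.maximalIdeal S)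
      (hIx.le.trans (by rw [Ideal.span_le]; rintro _ ⟨i, rfl⟩; exact hx i))
    obtain ⟨T, hT⟩ := exists_span_sup_pow
      (A := MvPowerSeries (Fin d) (S ⧸ IsLocalRing.maximalIdeal S))
      (IsLocalRing.maximalIdeal S) hfg (by
        intro a
        refine ⟨algebraMap _ _ a, ?_⟩
        rw [RingHom.comp_apply, hmap, AlgHom.commutes, hq]
        exact hg a) N
    refine finite_of_complete (Ideal.span (Set.range (MvPowerSeries.X : Fin d →
      MvPowerSeries (Fin d) (S ⧸ IsLocalRing.maximalIdeal S)))) T (top_le_iff.1 (hT.ge.trans (sup_le_sup_left ?_ _)))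
    rw [Ideal.smul_top_eq_map, hIx]
    exact hN
  have hdom : IsDomain (MvPowerSeries (Fin d) (S ⧸ IsLocalRing.maximalIdeal S)) :=
    NoZeroDivisors.to_isDomain _
  refine chain_bound_finite_char_zero (K := S ⧸ IsLocalRing.maximalIdeal S) (R := S)
    (injective_of_dim d (mvps_dim_le _ d) hd) t ht n h ?_
  have : (fun i => algebraMap (MvPowerSeries (Fin d) (S ⧸ IsLocalRing.maximalIdeal S)) S
    (MvPowerSeries.X i)) = x := funext hφ
  rw [this]
  exact H


theorem ringKrullDim_le_of_flat_local {R S : Type*} [CommRing R] [CommRing S] [IsLocalRing R]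
    [IsLocalRing S] [Algebra R S] [IsLocalHom (algebraMap R S)] [Module.Flat R S] :
    ringKrullDim R ≤ ringKrullDim S := by
  rw [← IsLocalRing.maximalIdeal_height_eq_ringKrullDim,
    ← IsLocalRing.maximalIdeal_height_eq_ringKrullDim]
  have hlo : (IsLocalRing.maximalIdeal S).LiesOver (IsLocalRing.maximalIdeal R) :=
    ⟨(IsLocalRing.maximalIdeal_comap (algebraMap R S)).symm⟩
  have key : (IsLocalRing.maximalIdeal R).height ≤ (IsLocalRing.maximalIdeal S).height := by
    have e1 := (IsLocalRing.closedPoint R).height_eq_orderHeight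
    have e2 := (IsLocalRing.closedPoint S).height_eq_orderHeight
    change (IsLocalRing.maximalIdeal R).height = _ at e1
    change (IsLocalRing.maximalIdeal S).height = _ at e2
    rw [e1, e2]
    refine Order.height_le fun l hl => ?_
    have : (IsLocalRing.maximalIdeal S).LiesOver l.last.asIdeal := by
      rw [hl]; exact hlo
    obtain ⟨L, hL1, hL2, -⟩ := Ideal.exists_ltSeries_of_hasGoingDown l (IsLocalRing.maximalIdeal S)
    rw [← hL1]
    exact Order.length_le_height hL2.le
  exact_mod_cast key

theorem chain_bound_char_zero {R : Type u} [CommRing R] [IsNoetherianRing R] [IsLocalRing R]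
    [Algebra ℚ R] {d : ℕ} (hd : (d : WithBot ℕ∞) ≤ ringKrullDim R) (x : Fin d → R)
    (hx : ∀ i, x i ∈ IsLocalRing.maximalIdeal R)
    (hxp : (Ideal.span (Set.range x)).radical = IsLocalRing.maximalIdeal R)
    (t : Fin d → ℕ) (ht : ∀ i, 0 < t i) (n h : ℕ) (H : HasChain R x t n h) :
    n * ∏ i, t i ≤ h := by
  let S := AdicCompletion (IsLocalRing.maximalIdeal R) R
  have hm : IsLocalRing.maximalIdeal S = (IsLocalRing.maximalIdeal R).map (algebraMap R S) :=
    AdicCompletion.maximalIdeal_eq_map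
  have hm2 : (IsLocalRing.maximalIdeal R).FG := Ideal.fg_of_isNoetherianRing _
  obtain ⟨N, hN⟩ := Ideal.exists_radical_pow_le_of_fg (Ideal.span (Set.range x)) (by rwa [hxp])
  rw [hxp] at hN
  let _ : Algebra ℚ S := ((algebraMap R S).comp (algebraMap ℚ R)).toAlgebra
  refine chain_bound_complete (S := S) (hm ▸ hm2.map _) (hd.trans ringKrullDim_le_of_flat_local)
    (fun i => algebraMap R S (x i)) (fun i => hm ▸ Ideal.mem_map_of_mem _ (hx i)) N ?_ t ht n h
    (H.map _)
  rw [hm, ← Ideal.map_pow]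
  refine (Ideal.map_mono hN).trans ?_
  rw [Ideal.map_span, ← Set.range_comp]
  rfl

theorem chain_bound_of_field {R : Type u} [CommRing R] [IsNoetherianRing R] [IsLocalRing R]
    (hfield : ∃ K : Subring R, IsField K) {d : ℕ} (hd : (d : WithBot ℕ∞) ≤ ringKrullDim R)
    (x : Fin d → R) (hx : ∀ i, x i ∈ IsLocalRing.maximalIdeal R)
    (hxp : (Ideal.span (Set.range x)).radical = IsLocalRing.maximalIdeal R)
    (t : Fin d → ℕ) (ht : ∀ i, 0 < t i) (n h : ℕ) (H : HasChain R x t n h) :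
    n * ∏ i, t i ≤ h := by
  obtain ⟨K, hK⟩ := hfield
  let _ : Field K := hK.toField
  obtain ⟨p, hp⟩ := CharP.exists K
  rcases CharP.char_is_prime_or_zero K p with hpp | rfl
  · have : CharP R p := charP_of_injective_ringHom (f := K.subtype) Subtype.val_injective p
    exact chain_bound_local_charP p hpp hd x hx hxp t ht n h H
  · have : CharZero K := CharP.charP_to_charZero K
    let _ : Algebra ℚ R := (K.subtype.comp (algebraMap ℚ K)).toAlgebra
    exact chain_bound_char_zero hd x hx hxp t ht n h H

/-- If `R` is a Noetherian local ring of Krull dimension `d`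
containing a field and `x₁, …, x_d` is a system of parameters of `R`, then
`𝔥^d_x(R^n) = n` for every `n ≥ 1`. -/
theorem content_pi_eq_of_sop
    {R : Type u} [CommRing R] [IsNoetherianRing R] [IsLocalRing R]
    (hfield : ∃ K : Subring R, IsField K)
    {d : ℕ} (hd : ringKrullDim R = d)
    (x : Fin d → R) (hx : ∀ i, x i ∈ IsLocalRing.maximalIdeal R)
    (hxparam : (Ideal.span (Set.range x)).radical = IsLocalRing.maximalIdeal R)
    (n : ℕ) (hn : 1 ≤ n) :
    content x (Fin n → R) = n := by
  exact content_eq_of_bound x n fun t ht h H =>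
    chain_bound_of_field hfield hd.ge x hx hxparam t ht n h H
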